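/- Let d = (d_1, …, d_n) be a graphical degree sequence with minimum degree d_min ≥ 1 and maximum degree d_max satisfying 3 ≤ d_max ≤ (1/3)·√M, where M = Σ_{j=1}^n d_j. Then the mixing time τ(M(d), ε) of the switch chain M(d) on Ω(d) satisfies τ(M(d), ε) ≤ d_max^{14} · M^9 · ( (1/2)·M·log(M) + log(ε^{-1}) ). -/

import Mathlib

/-!
The bound comes from a Poincaré inequality for the switch chain, proved with randomized canonical
paths between all pairs of realizations `G`, `G'` of `d`.

*Mixing.* The chain is symmetric and stays put with probability at least `1/3`, since choosing
`F' = F` is always accepted. Hence a Poincaré inequality with constant `κ` makes the `ℓ²` distance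
to uniformity decay at rate `1 / (3 κ)`, and about `3 κ (½ log |Ω| + log ε⁻¹)` steps suffice;
moreover `|Ω| ≤ M ^ M`.

*Paths.* Pair, at every vertex, the edges of `G \ G'` with those of `G' \ G`. Such a transition
system `ψ` splits the symmetric difference into closed alternating trails, which are switched one
after the other. While a trail is being switched the current graph is a *near-state*: it misses
one unit of degree at the start `u` of the trail and one at the current vertex `v`. A near-state is
completed to a realization by replacing one of its edges `ab` by `ua` and `vb`; sparsity leaves
enough edges `ab` for this, and completions of successive near-states are joined by a bounded number
of switches. So `|F G - F G'|` is at most the sum of `5 √(nearEnergy N)` over the near-states `N` on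
the path.

*Congestion.* To the near-state `N` on the path corresponds the complementary graph `L`, which is
`G + G' - N` minus one trail edge at each of the two defects, and a near-state too. From `N` and `L`
one recovers the symmetric difference and, at every vertex, the two classes that `ψ` matches with
each other. The number of systems matching these classes is the same as for the original ones, and
`N`, `L`, `ψ` determine everything, so averaging over `ψ` charges each pair `(N, L)` at most once.
A realization completes at most `M²` near-states, so there are at most `M² |Ω|` of them, which
gives a Poincaré constant of order `M⁷`.
-/

open scoped Classical

noncomputable section

namespace SwitchChain

variable {n : ℕ}

/-- `Omega d` is the set of simple graphs on `[n] = Fin n` with degree sequence `d`. -/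
def Omega (d : Fin n → ℕ) : Set (SimpleGraph (Fin n)) :=
  {G | ∀ v, {w | G.Adj v w}.ncard = d v}

/-- `M d` is the sum of the degrees. -/
def M (d : Fin n → ℕ) : ℕ := ∑ j, d j

/-- The maximum degree. -/
def dmax (d : Fin n → ℕ) : ℕ := Finset.univ.sup d

/-- `F` is an unordered pair of two distinct edges of `G` sharing no endpoint. -/
def IsDisjointEdgePair (G : SimpleGraph (Fin n)) (F : Set (Sym2 (Fin n))) : Prop :=
  F ⊆ G.edgeSet ∧ F.ncard = 2 ∧
    ∀ e ∈ F, ∀ f ∈ F, e ≠ f → ∀ v : Fin n, v ∈ e → v ∉ f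

/-- The number of unordered pairs of two distinct edges of `G` sharing no endpoint. -/
def pairCount (G : SimpleGraph (Fin n)) : ℕ :=
  {F : Set (Sym2 (Fin n)) | IsDisjointEdgePair G F}.ncard

/-- The support (set of endvertices) of a set of edges. -/
def supp (F : Set (Sym2 (Fin n))) : Set (Fin n) := {v | ∃ e ∈ F, v ∈ e}

/-- `F'` is a perfect matching of (the complete graph on) the vertex set `S`. -/
def IsPerfectMatchingOn (S : Set (Fin n)) (F' : Set (Sym2 (Fin n))) : Prop :=
  F'.ncard = 2 ∧ (∀ e ∈ F', ¬ e.IsDiag) ∧ supp F' = S ∧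
    ∀ e ∈ F', ∀ f ∈ F', e ≠ f → ∀ v : Fin n, v ∈ e → v ∉ f

/-- The number of accepted choices `(F, F')` of the switch-chain procedure at `G`
producing the graph `G'`. -/
def switchCount (G G' : SimpleGraph (Fin n)) : ℕ :=
  {FF : Set (Sym2 (Fin n)) × Set (Sym2 (Fin n)) |
    IsDisjointEdgePair G FF.1 ∧ IsPerfectMatchingOn (supp FF.1) FF.2 ∧
    FF.2 ∩ (G.edgeSet \ FF.1) = ∅ ∧
    G'.edgeSet = (G.edgeSet \ FF.1) ∪ FF.2}.ncard

/-- The state space of the switch chain, as a type. -/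
abbrev OmegaType (d : Fin n → ℕ) : Type := {G : SimpleGraph (Fin n) // G ∈ Omega d}

instance (d : Fin n → ℕ) : Fintype (OmegaType d) := Fintype.ofFinite _

/-- The transition matrix of the switch chain `M(d)` on `Omega d`: from `G`, choose
uniformly at random an unordered pair `F` of distinct edges of `G` sharing no endpoint
(there are `pairCount G` of them), and uniformly at random one of the three perfect
matchings `F'` on the four endvertices; if `F'` avoids `E(G) \ F`, move to the graph
with edge set `(E(G) \ F) ∪ F'`, else stay. -/
def transP (d : Fin n → ℕ) : Matrix (OmegaType d) (OmegaType d) ℝ :=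
  fun G G' =>
    if G = G' then
      1 - ∑ H : OmegaType d,
        (if H = G then 0 else (switchCount G.1 H.1 : ℝ) / (3 * pairCount G.1))
    else (switchCount G.1 G'.1 : ℝ) / (3 * pairCount G.1)

/-- Total variation distance between two distributions on a finite set. -/
def dTV {Ω : Type*} [Fintype Ω] (σ σ' : Ω → ℝ) : ℝ := (1/2) * ∑ x, |σ x - σ' x|

/-- The mixing time of a Markov chain with transition matrix `P` and stationary
distribution `π`: the maximum over starting states `x` of the least `T` such that the
distribution after `t ≥ T` steps from `x` is within `ε` of `π` in total variation. -/
def mixingTime {Ω : Type*} [Fintype Ω] (P : Matrix Ω Ω ℝ) (π : Ω → ℝ) (ε : ℝ) : ℕ :=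
  Finset.univ.sup fun x : Ω =>
    sInf {T : ℕ | ∀ t, T ≤ t → dTV (fun y => (P ^ t) x y) π ≤ ε}

/-- The uniform distribution on the state space. -/
def uniformDist (d : Fin n → ℕ) : OmegaType d → ℝ :=
  fun _ => (Fintype.card (OmegaType d) : ℝ)⁻¹

open Matrix

/-! ### Mixing from a Poincaré inequality -/

section MarkovChain

variable {Ω : Type*} [Fintype Ω] {P : Matrix Ω Ω ℝ} {δ κ : ℝ}

/-- The Dirichlet form of a symmetric transition matrix, normalized without the usual factor
`1 / 2` and the weight of the uniform distribution. -/
def dirichletForm (P : Matrix Ω Ω ℝ) (f : Ω → ℝ) : ℝ :=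
  ∑ x, ∑ y, P x y * (f x - f y) ^ 2

/-- The Poincaré inequality with constant `κ` for a chain whose stationary distribution is
uniform, written with sums over pairs in place of the variance. -/
def PoincareInequality (P : Matrix Ω Ω ℝ) (κ : ℝ) : Prop :=
  ∀ f : Ω → ℝ, ∑ x, ∑ y, (f x - f y) ^ 2 ≤ κ * Fintype.card Ω * dirichletForm P f

lemma dirichletForm_eq (hP : P ∈ rowStochastic ℝ Ω) (hsymm : P.IsSymm) (f : Ω → ℝ) :
    dirichletForm P f = 2 * (f ⬝ᵥ f - f ⬝ᵥ P *ᵥ f) := by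
  have expand (x y : Ω) : P x y * (f x - f y) ^ 2 =
      P x y * f x ^ 2 + P y x * f y ^ 2 - 2 * (f x * (P x y * f y)) := by
    rw [hsymm.apply x y]; ring
  have row (x : Ω) : ∑ y, P x y * f x ^ 2 = f x ^ 2 := by
    rw [← Finset.sum_mul, sum_row_of_mem_rowStochastic hP, one_mul]
  simp only [dirichletForm, expand, Finset.sum_sub_distrib, Finset.sum_add_distrib, dotProduct,
    mulVec]
  rw [Finset.sum_comm (f := fun x y => P y x * f y ^ 2)]
  simp only [row, ← Finset.mul_sum, ← sq]
  ring

/-- The two-step paths `x → x → y` and `x → y → y` alone give `P ^ 2` weight `2 δ P x y`. -/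
lemma mul_dirichletForm_le_dirichletForm_mul_self (hP : ∀ x y, 0 ≤ P x y)
    (hlazy : ∀ x, δ ≤ P x x) (f : Ω → ℝ) :
    2 * δ * dirichletForm P f ≤ dirichletForm (P * P) f := by
  simp only [dirichletForm, Finset.mul_sum]
  refine Finset.sum_le_sum fun x _ => Finset.sum_le_sum fun y _ => ?_
  rcases eq_or_ne x y with rfl | hxy
  · simp
  have two_step : 2 * δ * P x y ≤ (P * P) x y := calc
    2 * δ * P x y = δ * P x y + P x y * δ := by ring
    _ ≤ P x x * P x y + P x y * P y y := by gcongr <;> first | apply hP | apply hlazy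
    _ = ∑ z ∈ {x, y}, P x z * P z y := (Finset.sum_pair (f := fun z => P x z * P z y) hxy).symm
    _ ≤ (P * P) x y := Finset.sum_le_sum_of_subset_of_nonneg (Finset.subset_univ _)
        fun z _ _ => mul_nonneg (hP _ _) (hP _ _)
  rw [← mul_assoc]
  exact mul_le_mul_of_nonneg_right two_step (sq_nonneg _)

lemma sum_sum_sub_sq_of_sum_eq_zero {f : Ω → ℝ} (hf : ∑ x, f x = 0) :
    ∑ x, ∑ y, (f x - f y) ^ 2 = 2 * Fintype.card Ω * (f ⬝ᵥ f) := by
  simp only [sub_sq, mul_assoc, Finset.sum_add_distrib, Finset.sum_sub_distrib, ← Finset.mul_sum,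
    hf, dotProduct, ← sq]
  simp only [Finset.sum_const, Finset.card_univ, nsmul_eq_mul, ← Finset.mul_sum, mul_zero,
    sub_zero]
  ring

lemma mulVec_dotProduct_mulVec_le (hP : P ∈ rowStochastic ℝ Ω) (hsymm : P.IsSymm)
    (hδ : 0 ≤ δ) (hlazy : ∀ x, δ ≤ P x x) (hκ : 0 < κ) (hpoincare : PoincareInequality P κ)
    {f : Ω → ℝ} (hf : ∑ x, f x = 0) :
    (P *ᵥ f) ⬝ᵥ (P *ᵥ f) ≤ (1 - 2 * δ / κ) * (f ⬝ᵥ f) := by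
  have gap : 2 * (f ⬝ᵥ f) ≤ κ * dirichletForm P f := by
    rcases isEmpty_or_nonempty Ω with h | h
    · simp [dirichletForm, dotProduct]
    · have hcard : (0 : ℝ) < Fintype.card Ω := by exact_mod_cast Fintype.card_pos
      refine le_of_mul_le_mul_left ?_ hcard
      linarith [hpoincare f, sum_sum_sub_sq_of_sum_eq_zero hf]
  have lazy := mul_dirichletForm_le_dirichletForm_mul_self (fun x y => hP.1 x y) hlazy f
  have square : f ⬝ᵥ (P * P) *ᵥ f = (P *ᵥ f) ⬝ᵥ (P *ᵥ f) := by
    rw [← mulVec_mulVec, dotProduct_mulVec, ← mulVec_transpose, hsymm.eq]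
  rw [dirichletForm_eq (mul_mem hP hP) (by rw [← sq]; exact hsymm.pow 2), square] at lazy
  have : 2 * δ / κ * (f ⬝ᵥ f) ≤ δ * dirichletForm P f := calc
    2 * δ / κ * (f ⬝ᵥ f) = δ / κ * (2 * (f ⬝ᵥ f)) := by ring
    _ ≤ δ / κ * (κ * dirichletForm P f) := by gcongr
    _ = δ * dirichletForm P f := by field_simp
  linarith

lemma pow_mulVec_dotProduct_pow_mulVec_le (hP : P ∈ rowStochastic ℝ Ω) (hsymm : P.IsSymm)
    (hδ : 0 ≤ δ) (hlazy : ∀ x, δ ≤ P x x) (hκ : 0 < κ) (hpoincare : PoincareInequality P κ)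
    {f : Ω → ℝ} (hf : ∑ x, f x = 0) (t : ℕ) :
    (P ^ t *ᵥ f) ⬝ᵥ (P ^ t *ᵥ f) ≤ Real.exp (-(2 * δ / κ) * t) * (f ⬝ᵥ f) := by
  induction t generalizing f with
  | zero => simp
  | succ t ih =>
    have mean_zero : ∑ x, (P *ᵥ f) x = 0 := by
      rw [← one_dotProduct, dotProduct_mulVec, ← mulVec_transpose, hsymm.eq, hP.2, one_dotProduct,
        hf]
    have contraction := mulVec_dotProduct_mulVec_le hP hsymm hδ hlazy hκ hpoincare hf
    have norm_nonneg : 0 ≤ f ⬝ᵥ f := Finset.sum_nonneg fun x _ => mul_self_nonneg _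
    calc (P ^ (t + 1) *ᵥ f) ⬝ᵥ (P ^ (t + 1) *ᵥ f)
        = (P ^ t *ᵥ (P *ᵥ f)) ⬝ᵥ (P ^ t *ᵥ (P *ᵥ f)) := by rw [pow_succ, mulVec_mulVec]
      _ ≤ Real.exp (-(2 * δ / κ) * t) * ((P *ᵥ f) ⬝ᵥ (P *ᵥ f)) := ih mean_zero
      _ ≤ Real.exp (-(2 * δ / κ) * t) * (Real.exp (-(2 * δ / κ)) * (f ⬝ᵥ f)) := by
          gcongr
          refine contraction.trans (mul_le_mul_of_nonneg_right ?_ norm_nonneg)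
          linarith [Real.add_one_le_exp (-(2 * δ / κ))]
      _ = Real.exp (-(2 * δ / κ) * (t + 1 : ℕ)) * (f ⬝ᵥ f) := by
          rw [← mul_assoc, ← Real.exp_add]; push_cast; ring_nf

lemma sum_sq_pow_sub_inv_card_le (hP : P ∈ rowStochastic ℝ Ω) (hsymm : P.IsSymm)
    (hδ : 0 ≤ δ) (hlazy : ∀ x, δ ≤ P x x) (hκ : 0 < κ) (hpoincare : PoincareInequality P κ)
    (x : Ω) (t : ℕ) :
    ∑ y, ((P ^ t) x y - (Fintype.card Ω : ℝ)⁻¹) ^ 2 ≤ Real.exp (-(2 * δ / κ) * t) := by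
  have : Nonempty Ω := ⟨x⟩
  set u : ℝ := (Fintype.card Ω : ℝ)⁻¹ with hu
  have hcard : Fintype.card Ω * u = 1 := by simp [hu]
  set f : Ω → ℝ := Pi.single x 1 - u • 1 with hf
  have mean_zero : ∑ y, f y = 0 := by simp [hf, hcard]
  have evolution (y : Ω) : (P ^ t *ᵥ f) y = (P ^ t) x y - u := by
    rw [hf, mulVec_sub, mulVec_smul, (pow_mem hP t).2, mulVec_single_one]
    simp [(hsymm.pow t).apply x y]
  have norm_start : f ⬝ᵥ f = 1 - u := by
    rw [hf, sub_dotProduct, ← hf, single_one_dotProduct, smul_dotProduct, one_dotProduct, mean_zero]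
    simp [hf]
  have u_nonneg : 0 ≤ u := by positivity
  have decay := pow_mulVec_dotProduct_pow_mulVec_le hP hsymm hδ hlazy hκ hpoincare mean_zero t
  calc ∑ y, ((P ^ t) x y - u) ^ 2 = (P ^ t *ᵥ f) ⬝ᵥ (P ^ t *ᵥ f) := by
        simp only [dotProduct, evolution, sq]
    _ ≤ Real.exp (-(2 * δ / κ) * t) * (f ⬝ᵥ f) := decay
    _ ≤ Real.exp (-(2 * δ / κ) * t) :=
        mul_le_of_le_one_right (Real.exp_nonneg _) (by rw [norm_start]; linarith)

lemma sq_two_mul_dTV_le (σ τ : Ω → ℝ) :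
    (2 * dTV σ τ) ^ 2 ≤ Fintype.card Ω * ∑ x, (σ x - τ x) ^ 2 := by
  simpa [dTV, sq_abs] using sq_sum_le_card_mul_sum_sq (s := Finset.univ) (f := fun x => |σ x - τ x|)

lemma dTV_le_of_poincareInequality (hP : P ∈ rowStochastic ℝ Ω) (hsymm : P.IsSymm)
    (hδ : 0 < δ) (hlazy : ∀ x, δ ≤ P x x) (hκ : 0 < κ) (hpoincare : PoincareInequality P κ)
    {ε : ℝ} (hε : 0 < ε) (x : Ω) {t : ℕ}
    (ht : κ / δ * (1 / 2 * Real.log (Fintype.card Ω) + Real.log ε⁻¹) ≤ t) :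
    dTV (fun y => (P ^ t) x y) (fun _ => (Fintype.card Ω : ℝ)⁻¹) ≤ ε := by
  have : Nonempty Ω := ⟨x⟩
  have hcard : (0 : ℝ) < Fintype.card Ω := by exact_mod_cast Fintype.card_pos
  have exponent_le :
      Real.log (Fintype.card Ω) + -(2 * δ / κ) * t ≤ Real.log (ε ^ 2) := by
    have : 2 * δ / κ * (κ / δ * (1 / 2 * Real.log (Fintype.card Ω) + Real.log ε⁻¹)) =
        Real.log (Fintype.card Ω) + 2 * Real.log ε⁻¹ := by field_simp
    rw [Real.log_pow]
    rw [Real.log_inv] at this ht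
    push_cast
    linarith [mul_le_mul_of_nonneg_left ht (show 0 ≤ 2 * δ / κ by positivity)]
  have sq_le : (2 * dTV (fun y => (P ^ t) x y) (fun _ => (Fintype.card Ω : ℝ)⁻¹)) ^ 2 ≤ ε ^ 2 :=
    calc _ ≤ Fintype.card Ω * ∑ y, ((P ^ t) x y - (Fintype.card Ω : ℝ)⁻¹) ^ 2 :=
          sq_two_mul_dTV_le _ _
      _ ≤ Fintype.card Ω * Real.exp (-(2 * δ / κ) * t) := by
          gcongr; exact sum_sq_pow_sub_inv_card_le hP hsymm hδ.le hlazy hκ hpoincare x t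
      _ = Real.exp (Real.log (Fintype.card Ω) + -(2 * δ / κ) * t) := by
          rw [Real.exp_add, Real.exp_log hcard]
      _ ≤ ε ^ 2 := (Real.le_log_iff_exp_le (by positivity)).mp exponent_le
  linarith [abs_le_of_sq_le_sq' sq_le hε.le]

lemma mixingTime_le_add_one {π : Ω → ℝ} {ε T : ℝ} (hT : 0 ≤ T)
    (h : ∀ x, ∀ t : ℕ, T ≤ t → dTV (fun y => (P ^ t) x y) π ≤ ε) :
    (mixingTime P π ε : ℝ) ≤ T + 1 := by
  have : mixingTime P π ε ≤ ⌈T⌉₊ := Finset.sup_le fun x _ => Nat.sInf_le fun t ht =>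
    h x t ((Nat.le_ceil T).trans (by exact_mod_cast ht))
  calc (mixingTime P π ε : ℝ) ≤ ⌈T⌉₊ := by exact_mod_cast this
    _ ≤ T + 1 := (Nat.ceil_lt_add_one hT).le

theorem mixingTime_le_of_poincareInequality (hP : P ∈ rowStochastic ℝ Ω) (hsymm : P.IsSymm)
    (hδ : 0 < δ) (hlazy : ∀ x, δ ≤ P x x) (hκ : 0 < κ) (hpoincare : PoincareInequality P κ)
    {ε : ℝ} (hε : 0 < ε) (hε' : ε ≤ 1) :
    (mixingTime P (fun _ => (Fintype.card Ω : ℝ)⁻¹) ε : ℝ) ≤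
      κ / δ * (1 / 2 * Real.log (Fintype.card Ω) + Real.log ε⁻¹) + 1 := by
  have log_nonneg : 0 ≤ Real.log ε⁻¹ := Real.log_nonneg ((one_le_inv₀ hε).mpr hε')
  exact mixingTime_le_add_one (by positivity) fun x _ ht =>
    dTV_le_of_poincareInequality hP hsymm hδ hlazy hκ hpoincare hε x ht

end MarkovChain

open SimpleGraph (edge)
open scoped symmDiff

/-! ### Toggling edges and switches -/

section Switches

variable {V : Type*} {G A B : SimpleGraph V} {a b : V} {d : V → ℕ}

/-- The degree of a vertex, stated without the finiteness instance `SimpleGraph.degree` asks for;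
it is `0` at a vertex with infinitely many neighbours. -/
def deg (G : SimpleGraph V) (v : V) : ℕ := (G.neighborSet v).ncard

/-- `G` is a realization of the degree sequence `d`. -/
def Realizes (d : V → ℕ) (G : SimpleGraph V) : Prop := ∀ v, deg G v = d v

lemma adj_symmDiff (G H : SimpleGraph V) (a b : V) :
    (G ∆ H).Adj a b ↔ ¬(G.Adj a b ↔ H.Adj a b) := by
  simp only [symmDiff_def, SimpleGraph.sup_adj, SimpleGraph.sdiff_adj]
  tauto

lemma adj_symmDiff_edge (G : SimpleGraph V) (a b x y : V) : (G ∆ edge a b).Adj x y ↔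
    ¬(G.Adj x y ↔ (x = a ∧ y = b ∨ x = b ∧ y = a) ∧ x ≠ y) := by
  rw [adj_symmDiff, SimpleGraph.edge_adj]

lemma deg_symmDiff_edge_of_not_adj [Finite V] (hab : a ≠ b) (h : ¬G.Adj a b) (y : V) :
    deg (G ∆ edge a b) y = deg G y + (if y = a then 1 else 0) + (if y = b then 1 else 0) := by
  have neighbors_eq (z : V) (hz : ∀ x, (G ∆ edge a b).Adj y x ↔ x = z ∨ G.Adj y x) :
      (G ∆ edge a b).neighborSet y = insert z (G.neighborSet y) := by
    ext x; exact hz x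
  unfold deg
  by_cases hya : y = a
  · subst hya
    rw [neighbors_eq b (by intro x; rw [adj_symmDiff_edge]; grind),
      Set.ncard_insert_of_notMem (by simpa using h)]
    simp [hab]
  by_cases hyb : y = b
  · subst hyb
    rw [neighbors_eq a (by intro x; rw [adj_symmDiff_edge]; grind [G.adj_symm]),
      Set.ncard_insert_of_notMem (by simpa [G.adj_comm] using h)]
    simp [hya]
  have : (G ∆ edge a b).neighborSet y = G.neighborSet y := by
    ext x; simp [adj_symmDiff_edge, hya, hyb]
  simp [this, hya, hyb]

lemma deg_symmDiff_edge_of_adj [Finite V] (h : G.Adj a b) (y : V) :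
    deg (G ∆ edge a b) y + (if y = a then 1 else 0) + (if y = b then 1 else 0) = deg G y := by
  have not_adj : ¬(G ∆ edge a b).Adj a b := by simp [adj_symmDiff_edge, h, h.ne]
  rw [← deg_symmDiff_edge_of_not_adj h.ne not_adj, symmDiff_symmDiff_cancel_right]

/-- `B` arises from `A` by a switch: the edges `xy`, `zw` are replaced by `xz`, `yw`. Every edge
change is written as a symmetric difference, so that identities between graphs become identities
in the Boolean ring. -/
def IsSwitch (A B : SimpleGraph V) : Prop :=
  ∃ x y z w : V, A.Adj x y ∧ A.Adj z w ∧ x ≠ z ∧ y ≠ w ∧ ¬A.Adj x z ∧ ¬A.Adj y w ∧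
    B = A ∆ edge x y ∆ edge z w ∆ edge x z ∆ edge y w

lemma IsSwitch.symm (h : IsSwitch A B) : IsSwitch B A := by
  obtain ⟨x, y, z, w, hxy, hzw, hxz, hyw, nxz, nyw, rfl⟩ := h
  have := A.adj_symm hxy
  refine ⟨x, z, y, w, ?_, ?_, hxy.ne, hzw.ne, ?_, ?_, ?_⟩
  iterate 4
    simp only [adj_symmDiff_edge]
    grind [A.adj_symm, A.ne_of_adj]
  simp [symmDiff_assoc, symmDiff_comm, symmDiff_left_comm]

lemma IsSwitch.ne (h : IsSwitch A B) : A ≠ B := by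
  obtain ⟨x, y, z, w, hxy, hzw, hxz, -, nxz, nyw, rfl⟩ := h
  intro h
  have := congrArg (fun C => C.Adj x z) h
  simp only [adj_symmDiff_edge] at this
  grind [A.adj_symm, A.ne_of_adj]

lemma IsSwitch.realizes [Finite V] (h : IsSwitch A B) (hA : Realizes d A) : Realizes d B := by
  obtain ⟨x, y, z, w, hxy, hzw, hxz, hyw, nxz, nyw, rfl⟩ := h
  intro v
  have h₁ := deg_symmDiff_edge_of_adj hxy v
  have h₂ := deg_symmDiff_edge_of_adj (G := A ∆ edge x y) (a := z) (b := w)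
    (by simp only [adj_symmDiff_edge]; grind [A.adj_symm, A.ne_of_adj]) v
  have h₃ := deg_symmDiff_edge_of_not_adj (G := A ∆ edge x y ∆ edge z w) hxz
    (by simp only [adj_symmDiff_edge]; grind [A.adj_symm, A.ne_of_adj]) v
  have h₄ := deg_symmDiff_edge_of_not_adj (G := A ∆ edge x y ∆ edge z w ∆ edge x z) hyw
    (by simp only [adj_symmDiff_edge]; grind [A.adj_symm, A.ne_of_adj]) v
  have := hA v
  omega

end Switches

/-! ### The transition matrix -/

section TransitionMatrix

variable {d : Fin n → ℕ} {G H : SimpleGraph (Fin n)} {F F' : Set (Sym2 (Fin n))}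

lemma two_mul_card_edgeFinset (hG : G ∈ Omega d) : 2 * G.edgeFinset.card = M d := by
  rw [← G.sum_degrees_eq_twice_card_edges]
  refine Finset.sum_congr rfl fun v _ => ?_
  rw [← hG v, ← SimpleGraph.card_neighborSet_eq_degree, ← Nat.card_eq_fintype_card]
  rfl

lemma card_incidenceFinset (hG : G ∈ Omega d) (v : Fin n) : (G.incidenceFinset v).card = d v := by
  rw [SimpleGraph.card_incidenceFinset_eq_degree, ← hG v, ← SimpleGraph.card_neighborSet_eq_degree,
    ← Nat.card_eq_fintype_card]
  rfl

lemma isDisjointEdgePair_coe_iff {F : Finset (Sym2 (Fin n))} :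
    IsDisjointEdgePair G F ↔
      F ∈ G.edgeFinset.powersetCard 2 ∧ ¬∃ v, F ∈ (G.incidenceFinset v).powersetCard 2 := by
  simp only [IsDisjointEdgePair, Set.ncard_coe_finset, Finset.mem_powersetCard, ← and_assoc,
    ← Finset.coe_subset, SimpleGraph.coe_edgeFinset, SimpleGraph.coe_incidenceFinset]
  refine and_congr_right fun ⟨hF, hcard⟩ => ?_
  obtain ⟨e, f, hef, rfl⟩ := Finset.card_eq_two.mp hcard
  simp only [Finset.coe_pair, Set.pair_subset_iff, SimpleGraph.incidenceSet, hcard] at hF ⊢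
  simp only [Set.mem_sep_iff, hF, true_and, and_true, not_exists, not_and]
  grind

lemma pairCount_eq_card_filter (G : SimpleGraph (Fin n)) :
    pairCount G = ((G.edgeFinset.powersetCard 2).filter fun F =>
      ¬∃ v, F ∈ (G.incidenceFinset v).powersetCard 2).card := by
  rw [pairCount, ← Set.ncard_coe_finset, ← Set.ncard_image_of_injective _ Finset.coe_injective]
  congr 1
  ext F
  refine ⟨fun hF => ⟨F.toFinset, ?_, by simp⟩, ?_⟩
  · rw [Finset.mem_coe, Finset.mem_filter, ← isDisjointEdgePair_coe_iff, Set.coe_toFinset]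
    exact hF
  · rintro ⟨F, hF, rfl⟩
    exact isDisjointEdgePair_coe_iff.mpr (Finset.mem_filter.mp hF)

lemma disjoint_powersetCard_incidenceFinset {v w : Fin n} (hvw : v ≠ w) :
    Disjoint ((G.incidenceFinset v).powersetCard 2) ((G.incidenceFinset w).powersetCard 2) := by
  refine Finset.disjoint_left.mpr fun F hv hw => ?_
  obtain ⟨e, f, hef, rfl⟩ := Finset.card_eq_two.mp (Finset.mem_powersetCard.mp hv).2
  simp only [Finset.mem_powersetCard, Finset.insert_subset_iff, Finset.singleton_subset_iff,
    SimpleGraph.mem_incidenceFinset, SimpleGraph.incidenceSet, Set.mem_sep_iff] at hv hw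
  have he := (Sym2.mem_and_mem_iff hvw).mp ⟨hv.1.1.2, hw.1.1.2⟩
  have hf := (Sym2.mem_and_mem_iff hvw).mp ⟨hv.1.2.2, hw.1.2.2⟩
  exact hef (he.trans hf.symm)

/-- Pairs of edges that are not disjoint are counted by their common vertex; hence `pairCount`
depends on the degrees only. -/
lemma pairCount_add_sum_choose_two (hG : G ∈ Omega d) :
    pairCount G + ∑ v, (d v).choose 2 = G.edgeFinset.card.choose 2 := by
  have intersecting : ((G.edgeFinset.powersetCard 2).filter fun F =>
      ∃ v, F ∈ (G.incidenceFinset v).powersetCard 2) =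
      Finset.univ.biUnion fun v => (G.incidenceFinset v).powersetCard 2 := by
    ext F
    simp only [Finset.mem_filter, Finset.mem_biUnion, Finset.mem_univ, true_and,
      and_iff_right_iff_imp]
    exact fun ⟨v, hF⟩ => Finset.powersetCard_mono (SimpleGraph.incidenceFinset_subset G v) hF
  have card_intersecting : ((G.edgeFinset.powersetCard 2).filter fun F =>
      ∃ v, F ∈ (G.incidenceFinset v).powersetCard 2).card = ∑ v, (d v).choose 2 := by
    rw [intersecting, Finset.card_biUnion
      fun v _ w _ hvw => disjoint_powersetCard_incidenceFinset hvw]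
    simp only [Finset.card_powersetCard, card_incidenceFinset hG]
  rw [← Finset.card_powersetCard, pairCount_eq_card_filter, ← card_intersecting, add_comm,
    Finset.card_filter_add_card_filter_not]

lemma pairCount_eq_of_mem_Omega (hG : G ∈ Omega d) (hH : H ∈ Omega d) :
    pairCount G = pairCount H := by
  have : G.edgeFinset.card = H.edgeFinset.card := by
    linarith [two_mul_card_edgeFinset hG, two_mul_card_edgeFinset hH]
  have hG := pairCount_add_sum_choose_two hG
  have hH := pairCount_add_sum_choose_two hH
  rw [this] at hG
  omega

lemma eight_mul_pairCount_le (hG : G ∈ Omega d) : 8 * pairCount G ≤ M d ^ 2 := by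
  have := pairCount_add_sum_choose_two hG
  calc 8 * pairCount G ≤ 8 * G.edgeFinset.card.choose 2 := by omega
    _ ≤ (2 * G.edgeFinset.card) ^ 2 := by
        have choose_le := Nat.div_mul_le_self (G.edgeFinset.card * (G.edgeFinset.card - 1)) 2
        rw [← Nat.choose_two_right] at choose_le
        nlinarith [Nat.mul_le_mul_left G.edgeFinset.card (Nat.sub_le G.edgeFinset.card 1)]
    _ = M d ^ 2 := by rw [two_mul_card_edgeFinset hG]

/-- The choice `(F, F')` of the switch-chain procedure is accepted at `G` and leads to `H`. -/
def IsMove (G H : SimpleGraph (Fin n)) (F F' : Set (Sym2 (Fin n))) : Prop :=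
  IsDisjointEdgePair G F ∧ IsPerfectMatchingOn (supp F) F' ∧ F' ∩ (G.edgeSet \ F) = ∅ ∧
    H.edgeSet = (G.edgeSet \ F) ∪ F'

lemma IsMove.symm (h : IsMove G H F F') : IsMove H G F' F := by
  obtain ⟨⟨hF, card_F, disjoint_F⟩, ⟨card_F', -, supp_eq, disjoint_F'⟩, avoid, edgeSet_eq⟩ := h
  have sdiff_eq : H.edgeSet \ F' = G.edgeSet \ F := by
    rw [edgeSet_eq, Set.union_sdiff_right, sdiff_eq_left]
    exact (Set.disjoint_iff_inter_eq_empty.mpr avoid).symm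
  refine ⟨⟨?_, card_F', disjoint_F'⟩,
    ⟨card_F, fun e he => G.not_isDiag_of_mem_edgeSet (hF he), supp_eq.symm, disjoint_F⟩, ?_, ?_⟩
  · rw [edgeSet_eq]; exact Set.subset_union_right
  · rw [sdiff_eq, Set.inter_sdiff_self]
  · rw [sdiff_eq, Set.sdiff_union_of_subset hF]

lemma IsMove.eq (h : IsMove G H F F) : H = G := by
  rw [← SimpleGraph.edgeSet_inj, h.2.2.2, Set.sdiff_union_of_subset h.1.1]

lemma IsMove.right_unique {H' : SimpleGraph (Fin n)} (h : IsMove G H F F')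
    (h' : IsMove G H' F F') : H = H' := by
  rw [← SimpleGraph.edgeSet_inj, h.2.2.2, h'.2.2.2]

lemma switchCount_eq_ncard (G H : SimpleGraph (Fin n)) :
    switchCount G H = {FF : _ × _ | IsMove G H FF.1 FF.2}.ncard := rfl

lemma switchCount_comm (G H : SimpleGraph (Fin n)) : switchCount G H = switchCount H G := by
  rw [switchCount_eq_ncard, switchCount_eq_ncard,
    ← Set.ncard_image_of_injective _ (Prod.swap_injective (α := Set (Sym2 (Fin n))))]
  congr 1
  ext ⟨F, F'⟩
  rw [Set.image_swap_eq_preimage_swap]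
  exact ⟨IsMove.symm, IsMove.symm⟩

lemma IsPerfectMatchingOn.eq_or_eq_or_eq {x y z w : Fin n}
    (hF : IsPerfectMatchingOn {x, y, z, w} F) (hxy : x ≠ y) (hxz : x ≠ z) (hxw : x ≠ w)
    (hyz : y ≠ z) (hyw : y ≠ w) (hzw : z ≠ w) :
    F = {s(x, y), s(z, w)} ∨ F = {s(x, z), s(y, w)} ∨ F = {s(x, w), s(y, z)} := by
  obtain ⟨card_F, loopless, supp_eq, -⟩ := hF
  obtain ⟨e, f, hef, rfl⟩ := Set.ncard_eq_two.mp card_F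
  have cover (v : Fin n) : v = x ∨ v = y ∨ v = z ∨ v = w ↔ v ∈ e ∨ v ∈ f := by
    simpa [supp] using (Set.ext_iff.mp supp_eq v).symm
  wlog hxe : x ∈ e generalizing e f
  · rw [Set.pair_comm]
    exact this f e hef.symm (by rwa [Set.pair_comm]) (by rwa [Set.pair_comm])
      (by rwa [Set.pair_comm]) (fun v => (cover v).trans or_comm)
      (((cover x).mp (Or.inl rfl)).resolve_left hxe)
  obtain ⟨q, rfl⟩ := hxe
  have hxq : x ≠ q := by simpa using loopless s(x, q) (by simp)
  have f_eq {r s : Fin n} (hrs : r ≠ s) (hr : r = x ∨ r = y ∨ r = z ∨ r = w)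
      (hs : s = x ∨ s = y ∨ s = z ∨ s = w) (hr' : r ∉ s(x, q)) (hs' : s ∉ s(x, q)) : f = s(r, s) :=
    (Sym2.mem_and_mem_iff hrs).mp
      ⟨((cover r).mp hr).resolve_left hr', ((cover s).mp hs).resolve_left hs'⟩
  rcases (cover q).mpr (Or.inl (Sym2.mem_mk_right x q)) with rfl | rfl | rfl | rfl
  · exact absurd rfl hxq
  · rw [f_eq hzw] <;> grind
  · rw [f_eq hyw] <;> grind
  · rw [f_eq hyz] <;> grind

lemma IsDisjointEdgePair.exists_eq (hF : IsDisjointEdgePair G F) :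
    ∃ x y z w : Fin n, [x, y, z, w].Nodup ∧ F = {s(x, y), s(z, w)} := by
  obtain ⟨subset_edges, card_F, disjoint_F⟩ := hF
  obtain ⟨e, f, hef, rfl⟩ := Set.ncard_eq_two.mp card_F
  induction e with | _ x y
  induction f with | _ z w
  have hxy : x ≠ y := (G.mem_edgeSet.mp (subset_edges (by simp))).ne
  have hzw : z ≠ w := (G.mem_edgeSet.mp (subset_edges (by simp))).ne
  have disjoint := disjoint_F s(x, y) (by simp) s(z, w) (by simp) hef
  have hx := disjoint x (by simp)
  have hy := disjoint y (by simp)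
  simp only [Sym2.mem_iff, not_or] at hx hy
  exact ⟨x, y, z, w, by simp [*], rfl⟩

lemma supp_pair (x y z w : Fin n) : supp {s(x, y), s(z, w)} = {x, y, z, w} := by
  ext v
  simp [supp, or_assoc]

lemma card_filter_isPerfectMatchingOn_le (hF : IsDisjointEdgePair G F) :
    (Finset.univ.filter fun F' => IsPerfectMatchingOn (supp F) F' ∧ F' ≠ F).card ≤ 2 := by
  obtain ⟨x, y, z, w, distinct, rfl⟩ := hF.exists_eq
  refine (Finset.card_le_card (t := {{s(x, z), s(y, w)}, {s(x, w), s(y, z)}}) ?_).trans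
    Finset.card_le_two
  intro F' hF'
  simp only [Finset.mem_filter, Finset.mem_univ, true_and, supp_pair] at hF'
  simp only [List.nodup_cons, List.mem_cons, not_or] at distinct
  have := hF'.1.eq_or_eq_or_eq
  grind

lemma sum_switchCount_le (G : OmegaType d) :
    ∑ H with H ≠ G, switchCount G.1 H.1 ≤ 2 * pairCount G.1 := by
  have switchCount_eq (H : OmegaType d) :
      switchCount G.1 H.1 =
        (Finset.univ.filter fun FF : _ × _ => IsMove G.1 H.1 FF.1 FF.2).card := by
    rw [switchCount_eq_ncard, Set.ncard_eq_toFinset_card']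
    congr 1; ext; simp
  have pairCount_eq :
      pairCount G.1 = (Finset.univ.filter fun F => IsDisjointEdgePair G.1 F).card := by
    rw [pairCount, Set.ncard_eq_toFinset_card']
    congr 1; ext; simp
  calc ∑ H with H ≠ G, switchCount G.1 H.1
      = ((Finset.univ.filter (· ≠ G)).sigma fun H =>
          Finset.univ.filter fun FF : _ × _ => IsMove G.1 H.1 FF.1 FF.2).card := by
        simp only [Finset.card_sigma, switchCount_eq]
    _ ≤ ((Finset.univ.filter fun F => IsDisjointEdgePair G.1 F).sigma fun F =>
          Finset.univ.filter fun F' => IsPerfectMatchingOn (supp F) F' ∧ F' ≠ F).card := by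
        refine Finset.card_le_card_of_injOn (fun p => ⟨p.2.1, p.2.2⟩) ?_ ?_
        · rintro ⟨H, F, F'⟩ hp
          simp only [Finset.coe_sigma, Set.mem_sigma_iff, Finset.mem_coe, Finset.mem_filter,
            Finset.mem_univ, true_and] at hp ⊢
          refine ⟨hp.2.1, hp.2.2.1, ?_⟩
          rintro rfl
          exact hp.1 (Subtype.ext hp.2.eq)
        · rintro ⟨H, F, F'⟩ hp ⟨H', K, K'⟩ hp' heq
          simp only [Finset.coe_sigma, Set.mem_sigma_iff, Finset.mem_coe, Finset.mem_filter,
            Finset.mem_univ, true_and] at hp hp'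
          obtain ⟨rfl, heq⟩ := Sigma.mk.inj heq
          obtain rfl := eq_of_heq heq
          obtain rfl : H = H' := Subtype.ext (hp.2.right_unique hp'.2)
          rfl
    _ ≤ 2 * pairCount G.1 := by
        rw [Finset.card_sigma, mul_comm, pairCount_eq, ← smul_eq_mul]
        exact Finset.sum_le_card_nsmul _ _ _ fun F hF =>
          card_filter_isPerfectMatchingOn_le (Finset.mem_filter.mp hF).2

lemma transP_of_ne {G H : OmegaType d} (h : G ≠ H) :
    transP d G H = switchCount G.1 H.1 / (3 * pairCount G.1) := if_neg h

lemma transP_self (G : OmegaType d) :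
    transP d G G = 1 - ∑ H with H ≠ G, transP d G H := by
  simp only [transP, if_pos, Finset.sum_filter, ne_eq, ite_not]
  congr 1
  refine Finset.sum_congr rfl fun H _ => ?_
  grind

lemma one_third_le_transP_self (G : OmegaType d) : 1 / 3 ≤ transP d G G := by
  have off_diagonal : ∑ H with H ≠ G, transP d G H =
      (∑ H with H ≠ G, switchCount G.1 H.1 : ℕ) / (3 * pairCount G.1) := by
    push_cast
    rw [Finset.sum_div]
    exact Finset.sum_congr rfl fun H hH => transP_of_ne (Finset.mem_filter.mp hH).2.symm
  have count : ((∑ H with H ≠ G, switchCount G.1 H.1 : ℕ) : ℝ) ≤ 2 * pairCount G.1 := by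
    exact_mod_cast sum_switchCount_le G
  have : ∑ H with H ≠ G, transP d G H ≤ 2 / 3 := by
    rw [off_diagonal]
    exact div_le_of_le_mul₀ (by positivity) (by norm_num) (by linarith)
  rw [transP_self]
  linarith

lemma transP_isSymm : (transP d).IsSymm := by
  refine IsSymm.ext fun G H => ?_
  rcases eq_or_ne G H with rfl | h
  · rfl
  · rw [transP_of_ne h, transP_of_ne h.symm, switchCount_comm, pairCount_eq_of_mem_Omega G.2 H.2]

lemma transP_mem_rowStochastic : transP d ∈ rowStochastic ℝ (OmegaType d) := by
  rw [mem_rowStochastic_iff_sum]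
  refine ⟨fun G H => ?_, fun G => ?_⟩
  · rcases eq_or_ne G H with rfl | h
    · linarith [one_third_le_transP_self G]
    · rw [transP_of_ne h]; positivity
  · rw [← Finset.sum_filter_add_sum_filter_not _ (· ≠ G)]
    simp [Finset.filter_eq', transP_self]

lemma IsSwitch.exists_isMove (h : IsSwitch G H) : ∃ F F', IsMove G H F F' := by
  obtain ⟨x, y, z, w, hxy, hzw, hxz, hyw, nxz, nyw, rfl⟩ := h
  have hxw : x ≠ w := by rintro rfl; exact nxz hzw.symm
  have hyz : y ≠ z := by rintro rfl; exact nxz hxy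
  have ncard_pair {a b c e : Fin n} (hac : a ≠ c) (hae : a ≠ e) :
      ({s(a, b), s(c, e)} : Set (Sym2 (Fin n))).ncard = 2 :=
    Set.ncard_pair (by simp [hac, hae])
  have disjoint_pair {a b c e : Fin n} (hac : a ≠ c) (hae : a ≠ e) (hbc : b ≠ c) (hbe : b ≠ e) :
      ∀ f ∈ ({s(a, b), s(c, e)} : Set (Sym2 (Fin n))), ∀ f' ∈ ({s(a, b), s(c, e)} : Set _),
        f ≠ f' → ∀ v, v ∈ f → v ∉ f' := by
    rintro f (rfl | rfl) f' (rfl | rfl) hff' v <;> simp only [Sym2.mem_iff] <;> grind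
  refine ⟨{s(x, y), s(z, w)}, {s(x, z), s(y, w)}, ⟨?_, ncard_pair hxz hxw,
    disjoint_pair hxz hxw hyz hyw⟩, ⟨ncard_pair hxy.ne hxw, ?_, ?_,
    disjoint_pair hxy.ne hxw hyz.symm hzw.ne⟩, ?_, ?_⟩
  · rintro e (rfl | rfl) <;> assumption
  · rintro e (rfl | rfl) <;> simpa
  · rw [supp_pair, supp_pair, Set.insert_comm y z]
  · ext e
    simp only [Set.mem_inter_iff, Set.mem_insert_iff, Set.mem_singleton_iff, Set.mem_sdiff]
    grind [SimpleGraph.mem_edgeSet]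
  · ext e
    induction e with | _ a b
    simp only [SimpleGraph.mem_edgeSet, adj_symmDiff_edge, Set.mem_union, Set.mem_sdiff,
      Set.mem_insert_iff, Set.mem_singleton_iff, Sym2.eq_iff]
    grind [G.adj_symm, G.ne_of_adj]

lemma one_le_mul_transP {G H : OmegaType d} (h : IsSwitch G.1 H.1) :
    1 ≤ 3 / 8 * (M d : ℝ) ^ 2 * transP d G H := by
  have ne : G ≠ H := fun hGH => h.ne (congrArg Subtype.val hGH)
  have switchCount_pos : 1 ≤ switchCount G.1 H.1 := by
    obtain ⟨F, F', move⟩ := h.exists_isMove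
    rw [Nat.one_le_iff_ne_zero, ← Nat.pos_iff_ne_zero, switchCount_eq_ncard, Set.ncard_pos]
    exact ⟨(F, F'), move⟩
  have pairCount_pos : 1 ≤ pairCount G.1 := by
    have := Finset.single_le_sum (f := fun H : OmegaType d => switchCount G.1 H.1)
      (s := Finset.univ.filter (· ≠ G)) (fun _ _ => Nat.zero_le _)
      (Finset.mem_filter.mpr ⟨Finset.mem_univ H, ne.symm⟩)
    have := sum_switchCount_le G
    omega
  have pairCount_le : (8 : ℝ) * pairCount G.1 ≤ (M d : ℝ) ^ 2 := by
    exact_mod_cast eight_mul_pairCount_le G.2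
  rify at switchCount_pos pairCount_pos
  rw [transP_of_ne ne, mul_div_assoc', le_div_iff₀ (by positivity)]
  nlinarith

/-- A realization is determined by listing, for each vertex `v`, its `d v` neighbours, all of which
have positive degree. -/
lemma card_OmegaType_le (d : Fin n → ℕ) : Fintype.card (OmegaType d) ≤ M d ^ M d := by
  have card_support : Fintype.card {w // d w ≠ 0} ≤ M d := by
    rw [Fintype.card_subtype, Finset.card_eq_sum_ones, M, Finset.sum_filter]
    exact Finset.sum_le_sum fun w _ => by split_ifs <;> omega
  let e (G : OmegaType d) (v : Fin n) : G.1.neighborSet v ≃ Fin (d v) :=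
    Finite.equivFinOfCardEq (G.2 v)
  have degree_ne_zero (G : OmegaType d) (v : Fin n) (i : Fin (d v)) : d ((e G v).symm i) ≠ 0 := by
    rw [← G.2]
    exact Set.ncard_ne_zero_of_mem (G.1.adj_symm ((e G v).symm i).2)
  let listing (G : OmegaType d) (p : Σ v, Fin (d v)) : {w // d w ≠ 0} :=
    ⟨(e G p.1).symm p.2, degree_ne_zero G p.1 p.2⟩
  have adj_iff (G : OmegaType d) (v w : Fin n) : G.1.Adj v w ↔ ∃ i, (listing G ⟨v, i⟩).1 = w :=
    ⟨fun h => ⟨e G v ⟨w, h⟩, by simp [listing]⟩, fun ⟨i, hi⟩ => hi ▸ ((e G v).symm i).2⟩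
  have listing_injective : Function.Injective listing := fun G H h => by
    ext v w
    rw [adj_iff, adj_iff, h]
  calc Fintype.card (OmegaType d) ≤ Fintype.card ((Σ v, Fin (d v)) → {w // d w ≠ 0}) :=
        Fintype.card_le_of_injective listing listing_injective
    _ = Fintype.card {w // d w ≠ 0} ^ M d := by simp [M]
    _ ≤ M d ^ M d := Nat.pow_le_pow_left card_support _

end TransitionMatrix

/-! ### Near-states and their completions -/

section NearStates

variable {V : Type*} {d : V → ℕ} {K : SimpleGraph V} {u v w x a b a₀ b₀ : V}

/-- The graph `K` is a realization of `d` up to one missing edge end at `u` and one at `v` (two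
missing ends if `u = v`). -/
def IsNearState (d : V → ℕ) (K : SimpleGraph V) (u v : V) : Prop :=
  ∀ y, deg K y + (if y = u then 1 else 0) + (if y = v then 1 else 0) = d y

/-- The edge `ab` of `K` can be replaced by `ua` and `bv`. -/
structure IsSpare (K : SimpleGraph V) (u v a b : V) : Prop where
  adj : K.Adj a b
  not_adj_left : ¬K.Adj u a
  not_adj_right : ¬K.Adj v b
  ne_left : u ≠ a
  ne_right : v ≠ b

/-- The result of replacing the spare edge `ab` of the near-state `(K, u, v)` by `ua` and `bv`. -/
def completion (K : SimpleGraph V) (u v a b : V) : SimpleGraph V :=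
  K ∆ edge u a ∆ edge a b ∆ edge b v

/-- `A` is the completion of the near-state `N` along some spare edge. -/
def IsCompletion (N : SimpleGraph V × V × V) (A : SimpleGraph V) : Prop :=
  ∃ a b, IsSpare N.1 N.2.1 N.2.2 a b ∧ A = completion N.1 N.2.1 N.2.2 a b

lemma IsSpare.isCompletion (h : IsSpare K u v a b) :
    IsCompletion (K, u, v) (completion K u v a b) := ⟨a, b, h, rfl⟩

lemma completion_completion (K : SimpleGraph V) (u v a b : V) :
    completion (completion K u v a b) u v a b = K := by
  simp [completion, symmDiff_assoc, symmDiff_comm, symmDiff_left_comm]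

lemma IsNearState.slide [Finite V] (hK : IsNearState d K u v) (hvw : v ≠ w) (nvw : ¬K.Adj v w)
    (hwx : K.Adj w x) : IsNearState d (K ∆ edge v w ∆ edge w x) u x := by
  intro y
  have h₁ := deg_symmDiff_edge_of_not_adj hvw nvw y
  have h₂ := deg_symmDiff_edge_of_adj (G := K ∆ edge v w) (a := w) (b := x)
    (by simp only [adj_symmDiff_edge]; grind [K.adj_symm, K.ne_of_adj]) y
  have := hK y
  omega

lemma IsSpare.realizes_completion [Finite V] (h : IsSpare K u v a b) (hK : IsNearState d K u v) :
    Realizes d (completion K u v a b) := by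
  obtain ⟨hab, nua, nvb, hua, hvb⟩ := h
  intro y
  have h₁ := deg_symmDiff_edge_of_not_adj hua nua y
  have h₂ := deg_symmDiff_edge_of_adj (G := K ∆ edge u a) (a := a) (b := b)
    (by simp only [adj_symmDiff_edge]; grind [K.adj_symm, K.ne_of_adj]) y
  have h₃ := deg_symmDiff_edge_of_not_adj (G := K ∆ edge u a ∆ edge a b) hvb.symm
    (by simp only [adj_symmDiff_edge]; grind [K.adj_symm, K.ne_of_adj]) y
  have := hK y
  unfold completion
  omega

lemma IsSpare.isSwitch_symmDiff_edge (h : IsSpare K u v a b) (huv : u ≠ v) (nuv : ¬K.Adj u v) :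
    IsSwitch (completion K u v a b) (K ∆ edge u v) := by
  obtain ⟨hab, nua, nvb, hua, hvb⟩ := h
  refine ⟨u, a, v, b, ?_, ?_, huv, hab.ne, ?_, ?_, ?_⟩
  iterate 4
    simp only [completion, adj_symmDiff_edge]
    grind [K.adj_symm, K.ne_of_adj]
  simp [completion, SimpleGraph.edge_comm, symmDiff_assoc, symmDiff_comm, symmDiff_left_comm]

lemma IsSpare.exists_isSwitch_isSwitch (h₀ : IsSpare K u v a₀ b₀) (h : IsSpare K u v a b)
    (haa₀ : a ≠ a₀) (hab₀ : a ≠ b₀) (hba₀ : b ≠ a₀) (hbb₀ : b ≠ b₀) (na₀b : ¬K.Adj a₀ b) :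
    ∃ A, IsSwitch (completion K u v a₀ b₀) A ∧ IsSwitch A (completion K u v a b) := by
  obtain ⟨adj_ab₀, nua₀, nvb₀, hua₀, hvb₀⟩ := h₀
  obtain ⟨adj_ab, nua, nvb, hua, hvb⟩ := h
  refine ⟨_, ⟨u, a₀, a, b, ?_, ?_, hua, hba₀.symm, ?_, ?_, rfl⟩,
    ⟨a₀, b, b₀, v, ?_, ?_, adj_ab₀.ne, hvb.symm, ?_, ?_, ?_⟩⟩
  iterate 8
    simp only [completion, adj_symmDiff_edge]
    grind [K.adj_symm, K.ne_of_adj]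
  simp [completion, SimpleGraph.edge_comm, symmDiff_assoc, symmDiff_comm, symmDiff_left_comm]

lemma IsSpare.slide (h : IsSpare K u v a b) (hxb : x ≠ b) (nxb : ¬K.Adj x b) (haw : a ≠ w)
    (hbw : b ≠ w) : IsSpare (K ∆ edge v w ∆ edge w x) u x a b := by
  obtain ⟨hab, nua, nvb, hua, hvb⟩ := h
  refine ⟨?_, ?_, ?_, hua, hxb⟩
  all_goals
    simp only [adj_symmDiff_edge]
    grind [K.adj_symm, K.ne_of_adj]

lemma IsSpare.isSwitch_slide (h : IsSpare K u v a b) (hvw : v ≠ w) (nvw : ¬K.Adj v w)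
    (hwx : K.Adj w x) (hxb : x ≠ b) (nxb : ¬K.Adj x b) (haw : a ≠ w) (hbw : b ≠ w) :
    IsSwitch (completion K u v a b) (completion (K ∆ edge v w ∆ edge w x) u x a b) := by
  obtain ⟨hab, nua, nvb, -, hvb⟩ := h
  refine ⟨v, b, w, x, ?_, ?_, hvw, hxb.symm, ?_, ?_, ?_⟩
  iterate 4
    simp only [completion, adj_symmDiff_edge]
    grind [K.adj_symm, K.ne_of_adj]
  simp [completion, SimpleGraph.edge_comm, symmDiff_assoc, symmDiff_comm, symmDiff_left_comm]

end NearStates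

/-! ### Spare edges of sparse sequences -/

section Sparse

variable {V : Type*} [Fintype V] {d : V → ℕ} {D : ℕ} {K : SimpleGraph V} {u v : V}

/-- The degrees in `d` are at most `D`, and `D` is small compared to their sum. The threshold makes
each local choice of an auxiliary edge below possible: an edge `ab` of a near-state has to avoid at
most `5 * D + 11` vertices in total at its two ends. -/
structure IsSparse (d : V → ℕ) (D : ℕ) : Prop where
  le : ∀ v, d v ≤ D
  lt_sum : D * (5 * D + 11) + 2 < ∑ v, d v

lemma deg_eq_sum (K : SimpleGraph V) (v : V) : deg K v = ∑ w, if K.Adj v w then 1 else 0 := by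
  rw [deg, Set.ncard_eq_toFinset_card', Finset.sum_boole]
  simp [← SimpleGraph.neighborFinset_def, SimpleGraph.neighborFinset_eq_filter]

lemma exists_adj_notMem (hD : ∀ v, deg K v ≤ D) {X Y : Set V}
    (h : D * (X.ncard + Y.ncard) < ∑ v, deg K v) : ∃ a b, K.Adj a b ∧ a ∉ X ∧ b ∉ Y := by
  by_contra! hXY
  refine h.not_ge ?_
  have sum_deg_le (X : Set V) : ∑ v, (if v ∈ X then deg K v else 0) ≤ D * X.ncard := by
    rw [← Finset.sum_filter, Set.filter_mem_univ_eq_toFinset, Set.ncard_eq_toFinset_card',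
      mul_comm, ← smul_eq_mul]
    exact Finset.sum_le_card_nsmul _ _ D fun v _ => hD v
  calc ∑ a, deg K a = ∑ a, ∑ b, if K.Adj a b then 1 else 0 := by simp only [deg_eq_sum]
    _ ≤ ∑ a, ∑ b, ((if a ∈ X then if K.Adj a b then 1 else 0 else 0) +
          if b ∈ Y then if K.Adj b a then 1 else 0 else 0) := by
        refine Finset.sum_le_sum fun a _ => Finset.sum_le_sum fun b _ => ?_
        have := hXY a b
        grind [K.adj_symm]
    _ = ∑ a, (if a ∈ X then deg K a else 0) + ∑ b, (if b ∈ Y then deg K b else 0) := by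
        simp only [Finset.sum_add_distrib]
        rw [Finset.sum_comm (f := fun a b => if b ∈ Y then if K.Adj b a then 1 else 0 else 0)]
        simp only [deg_eq_sum, Finset.sum_ite_irrel, Finset.sum_const_zero]
    _ ≤ D * (X.ncard + Y.ncard) := by rw [mul_add]; exact add_le_add (sum_deg_le X) (sum_deg_le Y)

lemma IsNearState.sum_deg (h : IsNearState d K u v) : ∑ y, deg K y + 2 = ∑ y, d y := by
  simp [← Finset.sum_congr rfl fun y _ => h y, Finset.sum_add_distrib]

lemma IsNearState.deg_le (h : IsNearState d K u v) (hd : IsSparse d D) (y : V) : deg K y ≤ D := by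
  have := h y
  have := hd.le y
  omega

lemma IsNearState.exists_adj_notMem (h : IsNearState d K u v) (hd : IsSparse d D) {X Y : Set V}
    (hXY : X.ncard + Y.ncard ≤ 5 * D + 11) : ∃ a b, K.Adj a b ∧ a ∉ X ∧ b ∉ Y := by
  refine SwitchChain.exists_adj_notMem (h.deg_le hd) ?_
  have := h.sum_deg
  have := hd.lt_sum
  have := Nat.mul_le_mul_left D hXY
  omega

lemma IsNearState.exists_isSpare (h : IsNearState d K u v) (hd : IsSparse d D) :
    ∃ a b, IsSpare K u v a b := by
  obtain ⟨a, b, hab, ha, hb⟩ := h.exists_adj_notMem hd (X := insert u (K.neighborSet u))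
    (Y := insert v (K.neighborSet v)) (by
      have hu := Set.ncard_insert_le u (K.neighborSet u)
      have hv := Set.ncard_insert_le v (K.neighborSet v)
      have := h.deg_le hd u
      have := h.deg_le hd v
      unfold deg at *
      omega)
  simp only [Set.mem_insert_iff, SimpleGraph.mem_neighborSet, not_or] at ha hb
  exact ⟨a, b, hab, ha.2, hb.2, Ne.symm ha.1, Ne.symm hb.1⟩

end Sparse

/-! ### Energies and local moves -/

section Energy

variable {V : Type*} [Fintype V] {d : V → ℕ} {D : ℕ} {F : SimpleGraph V → ℝ}
  {A B K : SimpleGraph V} {N : SimpleGraph V × V × V} {u v w x a b a₀ b₀ : V}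

/-- The set of realizations of `d`, the state space of the switch chain. -/
def realizations (d : V → ℕ) : Finset (SimpleGraph V) := Finset.univ.filter (Realizes d)

/-- The set of near-states of `d`. -/
def nearStates (d : V → ℕ) : Finset (SimpleGraph V × V × V) :=
  Finset.univ.filter fun N => IsNearState d N.1 N.2.1 N.2.2

/-- The local energy of `F` at `A`: its squared increments along the switches leaving `A`. -/
def energy (d : V → ℕ) (F : SimpleGraph V → ℝ) (A : SimpleGraph V) : ℝ :=
  ∑ B ∈ (realizations d).filter (IsSwitch A), (F A - F B) ^ 2

/-- The total energy of `F` at the completions of the near-state `N`. -/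
def nearEnergy (d : V → ℕ) (F : SimpleGraph V → ℝ) (N : SimpleGraph V × V × V) : ℝ :=
  ∑ A ∈ (realizations d).filter (IsCompletion N), energy d F A

/-- A fixed completion of each near-state, junk where there is none. -/
def someCompletion (N : SimpleGraph V × V × V) : SimpleGraph V :=
  Classical.epsilon (IsCompletion N)

@[simp] lemma mem_realizations : A ∈ realizations d ↔ Realizes d A := by simp [realizations]

@[simp] lemma mem_nearStates : N ∈ nearStates d ↔ IsNearState d N.1 N.2.1 N.2.2 := by
  simp [nearStates]

lemma energy_nonneg (d : V → ℕ) (F : SimpleGraph V → ℝ) (A : SimpleGraph V) : 0 ≤ energy d F A :=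
  Finset.sum_nonneg fun _ _ => sq_nonneg _

lemma nearEnergy_nonneg (d : V → ℕ) (F : SimpleGraph V → ℝ) (N : SimpleGraph V × V × V) :
    0 ≤ nearEnergy d F N :=
  Finset.sum_nonneg fun _ _ => energy_nonneg _ _ _

lemma IsCompletion.realizes (h : IsCompletion N A) (hN : N ∈ nearStates d) : Realizes d A := by
  obtain ⟨a, b, hab, rfl⟩ := h
  exact hab.realizes_completion (mem_nearStates.mp hN)

lemma isCompletion_someCompletion (hN : N ∈ nearStates d) (hd : IsSparse d D) :
    IsCompletion N (someCompletion N) :=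
  have ⟨a, b, hab⟩ := (mem_nearStates.mp hN).exists_isSpare hd
  Classical.epsilon_spec ⟨completion N.1 N.2.1 N.2.2 a b, a, b, hab, rfl⟩

/-- The completion, together with the two new edges suitably oriented, determines the
near-state. -/
lemma card_filter_isCompletion_le (hA : Realizes d A) :
    ((nearStates d).filter (IsCompletion · A)).card ≤ (∑ v, d v) ^ 2 := by
  set darts := Finset.univ.filter fun p : V × V => A.Adj p.1 p.2
  have card_darts : darts.card = ∑ v, d v := by
    simp only [darts, Finset.card_filter, Fintype.sum_prod_type, ← deg_eq_sum, hA _]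
  have subset : (nearStates d).filter (IsCompletion · A) ⊆ (darts ×ˢ darts).image fun p =>
      (completion A p.1.1 p.2.1 p.1.2 p.2.2, p.1.1, p.2.1) := by
    rintro ⟨K, u, v⟩ hN
    obtain ⟨-, a, b, ⟨hab, nua, nvb, hua, hvb⟩, rfl⟩ := Finset.mem_filter.mp hN
    dsimp only at hab nua nvb hua hvb
    refine Finset.mem_image.mpr ⟨((u, a), (v, b)), ?_, by simp [completion_completion]⟩
    simp only [darts, Finset.mem_product, Finset.mem_filter, Finset.mem_univ, true_and, completion,
      adj_symmDiff_edge]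
    grind [K.adj_symm, K.ne_of_adj]
  calc _ ≤ ((darts ×ˢ darts).image _).card := Finset.card_le_card subset
    _ ≤ (darts ×ˢ darts).card := Finset.card_image_le
    _ = (∑ v, d v) ^ 2 := by rw [Finset.card_product, card_darts, sq]

lemma sum_nearEnergy_le (d : V → ℕ) (F : SimpleGraph V → ℝ) :
    ∑ N ∈ nearStates d, nearEnergy d F N ≤
      (∑ v, d v : ℕ) ^ 2 * ∑ A ∈ realizations d, energy d F A := by
  simp only [nearEnergy, Finset.sum_filter]
  rw [Finset.sum_comm, Finset.mul_sum]
  refine Finset.sum_le_sum fun A hA => ?_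
  rw [← Finset.sum_filter, Finset.sum_const, nsmul_eq_mul]
  refine mul_le_mul_of_nonneg_right ?_ (energy_nonneg _ _ _)
  exact_mod_cast card_filter_isCompletion_le (mem_realizations.mp hA)

lemma card_nearStates_le (hd : IsSparse d D) :
    (nearStates d).card ≤ (∑ v, d v) ^ 2 * (realizations d).card := by
  have subset : nearStates d ⊆
      (realizations d).biUnion fun A => (nearStates d).filter (IsCompletion · A) := by
    intro N hN
    have completes := isCompletion_someCompletion hN hd
    exact Finset.mem_biUnion.mpr ⟨_, mem_realizations.mpr (completes.realizes hN),
      Finset.mem_filter.mpr ⟨hN, completes⟩⟩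
  rw [mul_comm]
  exact (Finset.card_le_card subset).trans <| Finset.card_biUnion_le_card_mul _ _ _ fun A hA =>
    card_filter_isCompletion_le (mem_realizations.mp hA)

lemma IsCompletion.dist_le_sqrt_nearEnergy (hA : IsCompletion N A) (hN : N ∈ nearStates d)
    (h : IsSwitch A B) : dist (F A) (F B) ≤ √(nearEnergy d F N) := by
  have hA' := hA.realizes hN
  rw [Real.dist_eq]
  apply Real.abs_le_sqrt
  calc (F A - F B) ^ 2 ≤ energy d F A :=
        Finset.single_le_sum (f := fun B => (F A - F B) ^ 2) (fun _ _ => sq_nonneg _)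
          (by simp [h, h.realizes hA'])
    _ ≤ nearEnergy d F N :=
        Finset.single_le_sum (f := energy d F) (fun _ _ => energy_nonneg _ _ _) (by simp [hA, hA'])

lemma dist_someCompletion_symmDiff_edge_le (hK : IsNearState d K u v) (hd : IsSparse d D)
    (huv : u ≠ v) (nuv : ¬K.Adj u v) :
    dist (F (someCompletion (K, u, v))) (F (K ∆ edge u v)) ≤ √(nearEnergy d F (K, u, v)) := by
  have hN : (K, u, v) ∈ nearStates d := mem_nearStates.mpr hK
  have completes := isCompletion_someCompletion hN hd
  refine completes.dist_le_sqrt_nearEnergy hN ?_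
  obtain ⟨a, b, hab, eq⟩ := completes
  rw [eq]
  exact hab.isSwitch_symmDiff_edge huv nuv

lemma IsSpare.dist_completion_le (h₀ : IsSpare K u v a₀ b₀) (h : IsSpare K u v a b)
    (hK : IsNearState d K u v) (haa₀ : a ≠ a₀) (hab₀ : a ≠ b₀) (hba₀ : b ≠ a₀) (hbb₀ : b ≠ b₀)
    (na₀b : ¬K.Adj a₀ b) :
    dist (F (completion K u v a₀ b₀)) (F (completion K u v a b)) ≤
      2 * √(nearEnergy d F (K, u, v)) := by
  have hN : (K, u, v) ∈ nearStates d := mem_nearStates.mpr hK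
  obtain ⟨A, switch₀, switch⟩ := h₀.exists_isSwitch_isSwitch h haa₀ hab₀ hba₀ hbb₀ na₀b
  have := h₀.isCompletion.dist_le_sqrt_nearEnergy (F := F) hN switch₀
  have := h.isCompletion.dist_le_sqrt_nearEnergy (F := F) hN switch.symm
  have := dist_triangle_right (F (completion K u v a₀ b₀)) (F (completion K u v a b)) (F A)
  linarith

lemma IsNearState.exists_isSpare_slide (hK : IsNearState d K u v) (hd : IsSparse d D)
    (w x a₀ b₀ a₁ b₁ : V) : ∃ a b, IsSpare K u v a b ∧ x ≠ b ∧ ¬K.Adj x b ∧ ¬K.Adj a₀ b ∧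
      ¬K.Adj a₁ b ∧ a ∉ ({w, b₀, b₁} : Set V) ∧ b ∉ ({w, a₀, b₀, a₁, b₁} : Set V) := by
  obtain ⟨a, b, hab, ha, hb⟩ := hK.exists_adj_notMem hd
    (X := K.neighborSet u ∪ {u, w, b₀, b₁})
    (Y := K.neighborSet v ∪ K.neighborSet x ∪ K.neighborSet a₀ ∪ K.neighborSet a₁ ∪
      {v, x, w, a₀, b₀, a₁, b₁}) (by
      have four : ({u, w, b₀, b₁} : Set V).ncard ≤ 4 := by
        simpa using (Set.ncard_coe_finset {u, w, b₀, b₁}).trans_le Finset.card_le_four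
      have seven : ({v, x, w, a₀, b₀, a₁, b₁} : Set V).ncard ≤ 7 :=
        (Set.ncard_insert_le _ _).trans (Nat.succ_le_succ (by
          simpa using (Set.ncard_coe_finset {x, w, a₀, b₀, a₁, b₁}).trans_le Finset.card_le_six))
      have := Set.ncard_union_le (K.neighborSet u) {u, w, b₀, b₁}
      have := Set.ncard_union_le (K.neighborSet v ∪ K.neighborSet x ∪ K.neighborSet a₀ ∪
        K.neighborSet a₁) {v, x, w, a₀, b₀, a₁, b₁}
      have := Set.ncard_union_le (K.neighborSet v ∪ K.neighborSet x ∪ K.neighborSet a₀)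
        (K.neighborSet a₁)
      have := Set.ncard_union_le (K.neighborSet v ∪ K.neighborSet x) (K.neighborSet a₀)
      have := Set.ncard_union_le (K.neighborSet v) (K.neighborSet x)
      have deg_le := hK.deg_le hd
      unfold deg at deg_le
      have := deg_le u; have := deg_le v; have := deg_le x; have := deg_le a₀; have := deg_le a₁
      omega)
  simp only [Set.mem_union, SimpleGraph.mem_neighborSet, Set.mem_insert_iff,
    Set.mem_singleton_iff, not_or] at ha hb ⊢
  exact ⟨a, b, ⟨hab, by tauto, by tauto, by grind, by grind⟩, by grind⟩

/-- Sliding the defect from `v` to `x` takes five switches: two to change the spare edge of the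
chosen completion, one to slide, and two to change the spare edge back. -/
lemma dist_someCompletion_slide_le (hK : IsNearState d K u v) (hd : IsSparse d D) (hvw : v ≠ w)
    (nvw : ¬K.Adj v w) (hwx : K.Adj w x) :
    dist (F (someCompletion (K, u, v))) (F (someCompletion (K ∆ edge v w ∆ edge w x, u, x))) ≤
      3 * √(nearEnergy d F (K, u, v)) +
        2 * √(nearEnergy d F (K ∆ edge v w ∆ edge w x, u, x)) := by
  have hK' := hK.slide hvw nvw hwx
  have hN : (K, u, v) ∈ nearStates d := mem_nearStates.mpr hK
  have hN' : (K ∆ edge v w ∆ edge w x, u, x) ∈ nearStates d := mem_nearStates.mpr hK'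
  obtain ⟨a₀, b₀, spare₀, eq₀⟩ := isCompletion_someCompletion hN hd
  obtain ⟨a₁, b₁, spare₁, eq₁⟩ := isCompletion_someCompletion hN' hd
  dsimp only at spare₀ eq₀ spare₁ eq₁
  obtain ⟨a, b, spare, hxb, nxb, na₀b, na₁b, ha, hb⟩ :=
    hK.exists_isSpare_slide hd w x a₀ b₀ a₁ b₁
  simp only [Set.mem_insert_iff, Set.mem_singleton_iff, not_or] at ha hb
  obtain ⟨haw, hab₀, hab₁⟩ := ha
  obtain ⟨hbw, hba₀, hbb₀, hba₁, hbb₁⟩ := hb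
  have ne_of_not_adj {c : V} (hc : ¬K.Adj c b) : a ≠ c := by
    rintro rfl; exact hc spare.adj
  have na₁b' : ¬(K ∆ edge v w ∆ edge w x).Adj a₁ b := by
    have := spare.ne_right
    simp only [adj_symmDiff_edge]
    grind
  have change₀ := spare₀.dist_completion_le (F := F) spare hK (ne_of_not_adj na₀b) hab₀ hba₀ hbb₀
    na₀b
  have slide := spare.isCompletion.dist_le_sqrt_nearEnergy (F := F) hN
    (spare.isSwitch_slide hvw nvw hwx hxb nxb haw hbw)
  have change₁ := spare₁.dist_completion_le (F := F) (spare.slide hxb nxb haw hbw) hK'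
    (ne_of_not_adj na₁b) hab₁ hba₁ hbb₁ na₁b'
  rw [dist_comm] at change₁
  rw [eq₀, eq₁]
  have := (dist_triangle4 _ _ _ _).trans (add_le_add (add_le_add change₀ slide) change₁)
  linarith

end Energy

/-! ### Pairings -/

section Pairings

variable {V : Type*} {S T : Set V} {p q : Equiv.Perm V} {z : V}

/-- The permutation `p` matches the elements of `S` in pairs, each consisting of an element of `T`
and one outside `T`, and fixes everything outside `S`. -/
structure IsPairing (S T : Set V) (p : Equiv.Perm V) : Prop where
  involutive : Function.Involutive p
  apply_ne_iff : ∀ {z}, p z ≠ z ↔ z ∈ S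
  mem_iff : ∀ {z}, z ∈ S → (z ∈ T ↔ p z ∉ T)

namespace IsPairing

lemma apply_mem_iff (h : IsPairing S T p) : p z ∈ S ↔ z ∈ S := by
  rw [← h.apply_ne_iff, ← h.apply_ne_iff, h.involutive, ne_comm]

lemma apply_mem_diff_iff (h : IsPairing S T p) : z ∈ S ∩ T ↔ p z ∈ S \ T := by
  rw [Set.mem_inter_iff, Set.mem_sdiff, h.apply_mem_iff]
  exact and_congr_right h.mem_iff

lemma two_mul_ncard [Finite V] (h : IsPairing S T p) : 2 * (S ∩ T).ncard = S.ncard := by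
  have image_eq : p '' (S ∩ T) = S \ T := by
    rw [Equiv.image_eq_preimage_symm]
    ext z
    rw [Set.mem_preimage, h.apply_mem_diff_iff, Equiv.apply_symm_apply]
  rw [← Set.ncard_inter_add_ncard_sdiff_eq_ncard S T, ← image_eq,
    Set.ncard_image_of_injective _ p.injective, two_mul]

lemma eq_of_eqOn (hp : IsPairing S T p) (hq : IsPairing S T q) (h : Set.EqOn p q (S ∩ T)) :
    p = q := by
  ext z
  by_cases hz : z ∈ S
  · by_cases hzT : z ∈ T
    · exact h ⟨hz, hzT⟩
    · have := h (hp.apply_mem_diff_iff.mpr (by rw [hp.involutive]; exact ⟨hz, hzT⟩))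
      rw [hp.involutive, eq_comm, hq.involutive.eq_iff] at this
      exact this
  · rw [not_not.mp (hp.apply_ne_iff.not.mpr hz), not_not.mp (hq.apply_ne_iff.not.mpr hz)]

end IsPairing

lemma exists_isPairing (e : ↥(S ∩ T) ≃ ↥(S \ T)) :
    ∃ p, IsPairing S T p ∧ ∀ z : ↥(S ∩ T), p z = e z := by
  let f : V → V := fun z =>
    if h : z ∈ S ∩ T then e ⟨z, h⟩ else if h : z ∈ S \ T then e.symm ⟨z, h⟩ else z
  have apply_inter (z : ↥(S ∩ T)) : f z = e z := dif_pos z.2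
  have apply_diff (z : ↥(S \ T)) : f z = e.symm z :=
    (dif_neg fun h => z.2.2 h.2).trans (dif_pos z.2)
  have apply_notMem {z : V} (hz : z ∉ S) : f z = z :=
    (dif_neg fun h => hz h.1).trans (dif_neg fun h => hz h.1)
  have cases_mem {z : V} (hz : z ∈ S) : (∃ a : ↥(S ∩ T), ↑a = z) ∨ ∃ b : ↥(S \ T), ↑b = z := by
    by_cases hzT : z ∈ T
    · exact .inl ⟨⟨z, hz, hzT⟩, rfl⟩
    · exact .inr ⟨⟨z, hz, hzT⟩, rfl⟩
  have involutive : Function.Involutive f := by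
    intro z
    by_cases hz : z ∈ S
    · obtain ⟨a, rfl⟩ | ⟨b, rfl⟩ := cases_mem hz
      · rw [apply_inter, apply_diff, e.symm_apply_apply]
      · rw [apply_diff, apply_inter, e.apply_symm_apply]
    · rw [apply_notMem hz, apply_notMem hz]
  have mem_iff {z : V} (hz : z ∈ S) : z ∈ T ↔ f z ∉ T := by
    obtain ⟨a, rfl⟩ | ⟨b, rfl⟩ := cases_mem hz
    · rw [apply_inter]; exact iff_of_true a.2.2 (e a).2.2
    · rw [apply_diff]; exact iff_of_false b.2.2 (not_not.mpr (e.symm b).2.2)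
  refine ⟨involutive.toPerm f, ⟨involutive, fun {z} => ⟨fun h => ?_, fun hz h => ?_⟩, mem_iff⟩,
    apply_inter⟩
  · by_contra hz
    exact h (apply_notMem hz)
  · have := mem_iff hz
    rw [show f z = z from h] at this
    exact iff_not_self this

lemma card_isPairing [Fintype V] (h : 2 * (S ∩ T).ncard = S.ncard) :
    Finset.card {p | IsPairing S T p} = (S.ncard / 2).factorial := by
  have ncard_eq : (S ∩ T).ncard = S.ncard / 2 := by omega
  have ncard_diff : (S ∩ T).ncard = (S \ T).ncard := by
    have := Set.ncard_inter_add_ncard_sdiff_eq_ncard S T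
    omega
  have e : ↥(S ∩ T) ≃ ↥(S \ T) := (Finite.card_eq.mp ncard_diff).some
  rw [← ncard_eq, ← Nat.card_coe_set_eq, Nat.card_eq_fintype_card, ← Fintype.card_equiv e,
    ← Finset.card_univ]
  refine Finset.card_bij
    (fun p hp => p.subtypeEquiv fun z => (Finset.mem_filter.mp hp).2.apply_mem_diff_iff)
    (fun _ _ => Finset.mem_univ _) (fun p hp q hq hpq => ?_) fun e _ => ?_
  · exact (Finset.mem_filter.mp hp).2.eq_of_eqOn (Finset.mem_filter.mp hq).2 fun z hz =>
      congrArg Subtype.val (Equiv.congr_fun hpq ⟨z, hz⟩)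
  · obtain ⟨p, hp, hpe⟩ := exists_isPairing e
    exact ⟨p, by simpa using hp, Equiv.ext fun z => Subtype.ext (hpe z)⟩

end Pairings

/-! ### Systems of pairings and alternation -/

section Alternating

variable {V : Type*} {H G G' : SimpleGraph V} {T : V → V → Prop} {ψ : V → Equiv.Perm V} {d : V → ℕ}

/-- At every vertex of `H`, `ψ` pairs the neighbours and fixes everything else: a trail entering
`y` from `z` leaves it towards `ψ y z`. -/
structure IsTransition (H : SimpleGraph V) (ψ : V → Equiv.Perm V) : Prop where
  involutive : ∀ y, Function.Involutive (ψ y)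
  apply_ne_iff : ∀ {y z}, ψ y z ≠ z ↔ H.Adj y z

/-- At every vertex, `ψ` pairs the neighbours satisfying `T` with the neighbours that do not. -/
def IsAlternating (H : SimpleGraph V) (T : V → V → Prop) (ψ : V → Equiv.Perm V) : Prop :=
  ∀ y, IsPairing (H.neighborSet y) {z | T y z} (ψ y)

lemma IsAlternating.isTransition (h : IsAlternating H T ψ) : IsTransition H ψ :=
  ⟨fun y => (h y).involutive, fun {y _} => (h y).apply_ne_iff⟩

lemma IsAlternating.two_mul_ncard [Finite V] (h : IsAlternating H T ψ) (y : V) :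
    2 * (H.neighborSet y ∩ {z | T y z}).ncard = deg H y := (h y).two_mul_ncard

/-- All systems of pairings that alternate with respect to `T`. -/
def alternatingSystems [Fintype V] (H : SimpleGraph V) (T : V → V → Prop) :
    Finset (V → Equiv.Perm V) := {ψ | IsAlternating H T ψ}

@[simp] lemma mem_alternatingSystems [Fintype V] :
    ψ ∈ alternatingSystems H T ↔ IsAlternating H T ψ := by simp [alternatingSystems]

lemma card_alternatingSystems [Fintype V]
    (h : ∀ y, 2 * (H.neighborSet y ∩ {z | T y z}).ncard = deg H y) :
    (alternatingSystems H T).card = ∏ y, (deg H y / 2).factorial := by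
  have : alternatingSystems H T =
      Fintype.piFinset fun y => {p | IsPairing (H.neighborSet y) {z | T y z} p} := by
    ext ψ; simp [IsAlternating]
  rw [this, Fintype.card_piFinset]
  exact Finset.prod_congr rfl fun y _ => card_isPairing (h y)

lemma deg_symmDiff [Finite V] (G H : SimpleGraph V) (y : V) :
    deg (G ∆ H) y + 2 * (G.neighborSet y ∩ H.neighborSet y).ncard = deg G y + deg H y := by
  have neighbors_eq : (G ∆ H).neighborSet y =
      (G.neighborSet y \ H.neighborSet y) ∪ (H.neighborSet y \ G.neighborSet y) := by
    ext z
    simp only [SimpleGraph.mem_neighborSet, adj_symmDiff, Set.mem_union, Set.mem_sdiff]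
    tauto
  have disjoint := disjoint_sdiff_sdiff (x := G.neighborSet y) (y := H.neighborSet y)
  have hG := Set.ncard_inter_add_ncard_sdiff_eq_ncard (G.neighborSet y) (H.neighborSet y)
  have hH := Set.ncard_inter_add_ncard_sdiff_eq_ncard (H.neighborSet y) (G.neighborSet y)
  rw [Set.inter_comm] at hH
  rw [deg, neighbors_eq, Set.ncard_union_eq disjoint, deg, deg]
  omega

lemma Realizes.card_alternatingSystems_pos [Fintype V] (hG : Realizes d G) (hG' : Realizes d G') :
    0 < (alternatingSystems (G ∆ G') G.Adj).card := by
  rw [card_alternatingSystems fun y => ?_]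
  · exact Finset.prod_pos fun y _ => Nat.factorial_pos _
  have neighbors_eq : (G ∆ G').neighborSet y ∩ {z | G.Adj y z} =
      G.neighborSet y \ G'.neighborSet y := by
    ext z
    simp only [SimpleGraph.mem_neighborSet, adj_symmDiff, Set.mem_inter_iff, Set.mem_ofPred_eq,
      Set.mem_sdiff]
    tauto
  have := Set.ncard_inter_add_ncard_sdiff_eq_ncard (G.neighborSet y) (G'.neighborSet y)
  have := deg_symmDiff G G' y
  have : deg G y = (G.neighborSet y).ncard := rfl
  rw [neighbors_eq]
  have := hG y
  have := hG' y
  omega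

end Alternating

/-! ### Trails -/

section Trails

variable {α : Type*} {f : Equiv.Perm α} {a b : α}

lemma minimalPeriod_pos [Finite α] (f : Equiv.Perm α) (a : α) : 0 < Function.minimalPeriod f a :=
  Function.minimalPeriod_pos_of_mem_periodicPts (f.injective.mem_periodicPts a)

variable [Fintype α]

/-- An injective numbering of the cycles of `f`, evaluated at the cycle through `a`. -/
def cycleNumber (f : Equiv.Perm α) (a : α) : ℕ :=
  Fintype.equivFin (Quotient (Equiv.Perm.SameCycle.setoid f)) ⟦a⟧

lemma cycleNumber_eq_iff : cycleNumber f a = cycleNumber f b ↔ f.SameCycle a b := by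
  rw [cycleNumber, cycleNumber, Fin.val_inj, EmbeddingLike.apply_eq_iff_eq]
  exact Quotient.eq

lemma cycleNumber_lt (f : Equiv.Perm α) (a : α) :
    cycleNumber f a < Fintype.card (Quotient (Equiv.Perm.SameCycle.setoid f)) := Fin.is_lt _

lemma cycleNumber_iterate (f : Equiv.Perm α) (a : α) (m : ℕ) :
    cycleNumber f (f^[m] a) = cycleNumber f a :=
  cycleNumber_eq_iff.mpr ⟨-m, by simp [Equiv.Perm.iterate_eq_pow]⟩

lemma cycleNumber_apply (f : Equiv.Perm α) (a : α) : cycleNumber f (f a) = cycleNumber f a :=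
  cycleNumber_iterate f a 1

lemma exists_iterate_eq (h : cycleNumber f a = cycleNumber f b) :
    ∃ m < Function.minimalPeriod f a, f^[m] a = b := by
  obtain ⟨m, rfl⟩ := (cycleNumber_eq_iff.mp h).exists_nat_pow_eq
  refine ⟨m % Function.minimalPeriod f a, Nat.mod_lt _ (minimalPeriod_pos f a), ?_⟩
  rw [Function.iterate_mod_minimalPeriod_eq, Equiv.Perm.iterate_eq_pow]

variable {V : Type*} {H : SimpleGraph V} {ψ : V → Equiv.Perm V} {S : Set (V × V)} {e : V × V}

/-- The trail determined by `ψ` traverses the dart `(a, b)`, that is, the edge `ab` from `a` to `b`,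
and then leaves `b` along the edge paired with `ab`. -/
def step (ψ : V → Equiv.Perm V) : Equiv.Perm (V × V) :=
  (Equiv.prodComm V V).trans (Equiv.prodShear (Equiv.refl V) ψ)

lemma fst_step (ψ : V → Equiv.Perm V) (e : V × V) : (step ψ e).1 = e.2 := rfl

lemma snd_step (ψ : V → Equiv.Perm V) (e : V × V) : (step ψ e).2 = ψ e.2 e.1 := rfl

namespace IsTransition

lemma step_swap_step (h : IsTransition H ψ) (e : V × V) : step ψ (step ψ e).swap = e.swap :=
  Prod.ext rfl (h.involutive e.2 e.1)

lemma adj_step_iff (h : IsTransition H ψ) :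
    H.Adj (step ψ e).1 (step ψ e).2 ↔ H.Adj e.1 e.2 := by
  rw [fst_step, snd_step, H.adj_comm e.1, ← h.apply_ne_iff, ← h.apply_ne_iff, h.involutive, ne_comm]

/- If a trail runs through `e` and later through `e.swap`, then the part in between is again of
this form, and shortening it from both ends leads to a contradiction at its middle. -/
lemma iterate_ne_swap (h : IsTransition H ψ) (m : ℕ) (he : H.Adj e.1 e.2) :
    (step ψ)^[m] e ≠ e.swap := by
  induction m using Nat.twoStepInduction generalizing e with
  | zero => exact fun heq => he.ne (congrArg Prod.fst heq)
  | one => exact fun heq => h.apply_ne_iff.mpr he.symm (congrArg Prod.snd heq)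
  | more m ih _ =>
    rw [Function.iterate_succ_apply', ← h.step_swap_step e, (step ψ).injective.ne_iff,
      Function.iterate_succ_apply]
    exact ih (h.adj_step_iff.mpr he)

end IsTransition

variable [Fintype V]

/-- The darts of the trails of `H`, each trail being traversed in only one of its two directions:
that with the smaller number. -/
def forwardDarts (H : SimpleGraph V) (ψ : V → Equiv.Perm V) : Set (V × V) :=
  {e | H.Adj e.1 e.2 ∧ cycleNumber (step ψ) e < cycleNumber (step ψ) e.swap}

lemma swap_notMem_forwardDarts (he : e ∈ forwardDarts H ψ) : e.swap ∉ forwardDarts H ψ :=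
  fun h => he.2.asymm h.2

namespace IsTransition

lemma step_mem_forwardDarts_iff (h : IsTransition H ψ) :
    step ψ e ∈ forwardDarts H ψ ↔ e ∈ forwardDarts H ψ := by
  have number_swap : cycleNumber (step ψ) (step ψ e).swap = cycleNumber (step ψ) e.swap := by
    rw [← cycleNumber_apply, h.step_swap_step]
  exact and_congr h.adj_step_iff (by rw [cycleNumber_apply, number_swap])

lemma iterate_mem_forwardDarts (h : IsTransition H ψ) (he : e ∈ forwardDarts H ψ) (m : ℕ) :
    (step ψ)^[m] e ∈ forwardDarts H ψ := by
  induction m with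
  | zero => exact he
  | succ m ih => rwa [Function.iterate_succ_apply', h.step_mem_forwardDarts_iff]

lemma mem_forwardDarts_or_swap_mem (h : IsTransition H ψ) (he : H.Adj e.1 e.2) :
    e ∈ forwardDarts H ψ ∨ e.swap ∈ forwardDarts H ψ := by
  have number_ne : cycleNumber (step ψ) e ≠ cycleNumber (step ψ) e.swap := fun heq =>
    have ⟨m, _, hm⟩ := exists_iterate_eq heq
    h.iterate_ne_swap m he hm
  exact number_ne.lt_or_gt.imp (⟨he, ·⟩) (⟨he.symm, ·⟩)

end IsTransition

/-- The graph whose edges are the darts in `S` without their direction. -/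
def dartGraph (S : Set (V × V)) : SimpleGraph V := SimpleGraph.fromRel fun a b => (a, b) ∈ S

lemma dartGraph_adj_iff (hS : S ⊆ forwardDarts H ψ) (he : e ∈ forwardDarts H ψ) :
    (dartGraph S).Adj e.1 e.2 ↔ e ∈ S := by
  have : e.swap ∉ S := fun h => swap_notMem_forwardDarts he (hS h)
  simp only [dartGraph, SimpleGraph.fromRel_adj, Prod.mk.eta]
  exact ⟨fun h => h.2.resolve_right this, fun h => ⟨he.1.ne, .inl h⟩⟩

lemma dartGraph_le (hS : S ⊆ forwardDarts H ψ) : dartGraph S ≤ H := by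
  rintro a b ⟨-, h | h⟩
  exacts [(hS h).1, (hS h).1.symm]

lemma IsTransition.dartGraph_forwardDarts (h : IsTransition H ψ) :
    dartGraph (forwardDarts H ψ) = H :=
  (dartGraph_le subset_rfl).antisymm fun _ _ he => ⟨he.ne, h.mem_forwardDarts_or_swap_mem he⟩

lemma dartGraph_insert (hS : S ⊆ forwardDarts H ψ) (he : e ∈ forwardDarts H ψ) (heS : e ∉ S) :
    dartGraph (insert e S) = dartGraph S ∆ edge e.1 e.2 := by
  have : e.swap ∉ S := fun h => swap_notMem_forwardDarts he (hS h)
  ext a b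
  obtain ⟨x, y⟩ := e
  simp only [adj_symmDiff_edge, dartGraph, SimpleGraph.fromRel_adj, Set.mem_insert_iff,
    Prod.mk.injEq, Prod.swap_prod_mk] at *
  grind

end Trails

/-! ### Partially switched trails give complementary near-states -/

section Cuts

variable {V : Type*} {G H J K : SimpleGraph V} {ψ : V → Equiv.Perm V} {S : Set (V × V)}
  {d : V → ℕ} {h e x : V × V}

/-- The darts of `K` together with the darts `h` and `e`. Marking an edge in one direction only
makes it count at one of its two ends. -/
def markedAdj (K : SimpleGraph V) (h e : V × V) (y z : V) : Prop :=
  K.Adj y z ∨ (y, z) = h ∨ (y, z) = e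

/-- The darts `h` and `e` belong to distinct edges of `H` that are not edges of `K`. -/
structure IsMissingPair (H K : SimpleGraph V) (h e : V × V) : Prop where
  adj_left : H.Adj h.1 h.2
  adj_right : H.Adj e.1 e.2
  not_adj_left : ¬K.Adj h.1 h.2
  not_adj_right : ¬K.Adj e.1 e.2
  ne : h ≠ e
  ne_swap : h ≠ e.swap

lemma ncard_setOf_mk_eq (y : V) (h : V × V) :
    {z | (y, z) = h}.ncard = if y = h.1 then 1 else 0 := by
  simp only [Prod.ext_iff]
  split_ifs with hy <;> simp [hy]

lemma IsMissingPair.ncard_markedAdj [Finite V] (hm : IsMissingPair H K h e) (y : V) :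
    (H.neighborSet y ∩ {z | markedAdj K h e y z}).ncard =
      (K.neighborSet y ∩ H.neighborSet y).ncard + (if y = h.1 then 1 else 0) +
        (if y = e.1 then 1 else 0) := by
  obtain ⟨adj_h, adj_e, nadj_h, nadj_e, ne, -⟩ := hm
  have eq_union : H.neighborSet y ∩ {z | markedAdj K h e y z} =
      K.neighborSet y ∩ H.neighborSet y ∪ {z | (y, z) = h} ∪ {z | (y, z) = e} := by
    ext z
    simp only [markedAdj, Set.mem_inter_iff, Set.mem_union, Set.mem_ofPred_eq,
      SimpleGraph.mem_neighborSet]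
    grind
  rw [eq_union, Set.ncard_union_eq, Set.ncard_union_eq, ncard_setOf_mk_eq, ncard_setOf_mk_eq]
  · rw [Set.disjoint_left]
    rintro z ⟨hz, -⟩ rfl
    exact nadj_h hz
  · rw [Set.disjoint_left]
    rintro z (⟨hz, -⟩ | rfl) heq
    · exact nadj_e (heq ▸ hz)
    · exact ne heq

lemma ncard_inter_eq_of_isAlternating [Finite V] {T T' : V → V → Prop}
    (h : IsAlternating H T ψ) (h' : IsAlternating H T' ψ) (y : V) :
    (H.neighborSet y ∩ {z | T y z}).ncard = (H.neighborSet y ∩ {z | T' y z}).ncard := by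
  have := h.two_mul_ncard y
  have := h'.two_mul_ncard y
  omega

lemma IsMissingPair.isNearState [Finite V] (hm : IsMissingPair H (G ∆ J) h e)
    (hG : IsAlternating H G.Adj ψ) (hK : IsAlternating H (markedAdj (G ∆ J) h e) ψ) (hJ : J ≤ H)
    (hd : Realizes d G) : IsNearState d (G ∆ J) h.1 e.1 := by
  intro y
  have sdiff_eq : (G ∆ J).neighborSet y \ H.neighborSet y =
      G.neighborSet y \ H.neighborSet y := by
    ext z
    simp only [Set.mem_sdiff, SimpleGraph.mem_neighborSet, adj_symmDiff]
    have := @hJ y z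
    tauto
  have ncard_K := Set.ncard_inter_add_ncard_sdiff_eq_ncard ((G ∆ J).neighborSet y) (H.neighborSet y)
  have ncard_G := Set.ncard_inter_add_ncard_sdiff_eq_ncard (G.neighborSet y) (H.neighborSet y)
  have ncard_eq := ncard_inter_eq_of_isAlternating hG hK y
  rw [hm.ncard_markedAdj, Set.inter_comm] at ncard_eq
  rw [← hd y, deg, deg, ← ncard_K, ← ncard_G, sdiff_eq]
  change (G.neighborSet y ∩ H.neighborSet y).ncard = _ at ncard_eq
  omega

lemma IsMissingPair.isNearState_compl [Finite V] (hm : IsMissingPair H K h e)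
    (hK : IsAlternating H (markedAdj K h e) ψ) (hd : IsNearState d K h.1 e.1) :
    IsNearState d (K ∆ H ∆ edge h.1 h.2 ∆ edge e.1 e.2) h.2 e.2 := by
  have adj_h : (K ∆ H).Adj h.1 h.2 :=
    (adj_symmDiff ..).mpr fun hiff => hm.not_adj_left (hiff.mpr hm.adj_left)
  have adj_e : (K ∆ H ∆ edge h.1 h.2).Adj e.1 e.2 := by
    have := hm.adj_right.ne
    have := hm.ne
    have := hm.ne_swap
    simp only [adj_symmDiff, SimpleGraph.edge_adj, hm.adj_right, hm.not_adj_right]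
    grind
  intro y
  have := deg_symmDiff_edge_of_adj adj_h y
  have := deg_symmDiff_edge_of_adj adj_e y
  have := deg_symmDiff K H y
  have ncard_eq := hK.two_mul_ncard y
  rw [hm.ncard_markedAdj] at ncard_eq
  have := hd y
  omega

lemma IsAlternating.adj_step_iff (hG : IsAlternating H G.Adj ψ) (he : H.Adj e.1 e.2) :
    G.Adj (step ψ e).1 (step ψ e).2 ↔ ¬G.Adj e.1 e.2 := by
  rw [G.adj_comm e.1]
  exact (not_iff_comm.mp ((hG e.2).mem_iff he.symm).symm).symm

variable [Fintype V]

/-- `S` consists of whole trails and, from one further trail, the segment from the dart `h` to the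
dart `x`; both ends of the segment belong to `G`. -/
structure IsCut (G H : SimpleGraph V) (ψ : V → Equiv.Perm V) (S : Set (V × V)) (h x : V × V) :
    Prop where
  subset : S ⊆ forwardDarts H ψ
  head_mem : h ∈ S
  last_mem : x ∈ S
  head_adj : G.Adj h.1 h.2
  last_adj : G.Adj x.1 x.2
  step_last_notMem : step ψ x ∉ S
  notMem_of_step_eq : ∀ {e}, step ψ e = h → e ∉ S
  mem_iff_step_mem : ∀ {e}, e ≠ x → step ψ e ≠ h → (e ∈ S ↔ step ψ e ∈ S)

lemma adj_symmDiff_dartGraph (hS : S ⊆ forwardDarts H ψ) (he : e ∈ forwardDarts H ψ) :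
    (G ∆ dartGraph S).Adj e.1 e.2 ↔ ¬(G.Adj e.1 e.2 ↔ e ∈ S) := by
  rw [adj_symmDiff, dartGraph_adj_iff hS he]

namespace IsCut

lemma step_last_mem_forwardDarts (c : IsCut G H ψ S h x) (hG : IsAlternating H G.Adj ψ) :
    step ψ x ∈ forwardDarts H ψ :=
  hG.isTransition.step_mem_forwardDarts_iff.mpr (c.subset c.last_mem)

lemma isMissingPair (c : IsCut G H ψ S h x) (hG : IsAlternating H G.Adj ψ) :
    IsMissingPair H (G ∆ dartGraph S) h (step ψ x) where
  adj_left := (c.subset c.head_mem).1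
  adj_right := (c.step_last_mem_forwardDarts hG).1
  not_adj_left := by
    rw [adj_symmDiff_dartGraph c.subset (c.subset c.head_mem), not_not]
    exact iff_of_true c.head_adj c.head_mem
  not_adj_right := by
    rw [adj_symmDiff_dartGraph c.subset (c.step_last_mem_forwardDarts hG), not_not,
      hG.adj_step_iff (c.subset c.last_mem).1]
    exact iff_of_false (not_not.mpr c.last_adj) c.step_last_notMem
  ne heq := c.step_last_notMem (heq ▸ c.head_mem)
  ne_swap heq := swap_notMem_forwardDarts (c.step_last_mem_forwardDarts hG)
    (heq ▸ c.subset c.head_mem)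

lemma markedAdj_step_iff (c : IsCut G H ψ S h x) (hG : IsAlternating H G.Adj ψ)
    (he : e ∈ forwardDarts H ψ) :
    markedAdj (G ∆ dartGraph S) h (step ψ x) e.2 e.1 ↔
      ¬markedAdj (G ∆ dartGraph S) h (step ψ x) (step ψ e).1 (step ψ e).2 := by
  have swap_ne_head : e.swap ≠ h := fun heq =>
    swap_notMem_forwardDarts he (heq ▸ c.subset c.head_mem)
  have swap_ne_step : e.swap ≠ step ψ x := fun heq =>
    swap_notMem_forwardDarts he (heq ▸ c.step_last_mem_forwardDarts hG)
  have adj_e := adj_symmDiff_dartGraph (G := G) c.subset he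
  have adj_step := adj_symmDiff_dartGraph (G := G) c.subset
    (hG.isTransition.step_mem_forwardDarts_iff.mpr he)
  rw [hG.adj_step_iff he.1] at adj_step
  simp only [markedAdj, Prod.mk.eta, (step ψ).injective.eq_iff, SimpleGraph.adj_comm _ e.2,
    adj_e, adj_step]
  change (_ ∨ e.swap = h ∨ e.swap = step ψ x) ↔ _
  by_cases hx : e = x
  · subst hx
    simp [swap_ne_head, swap_ne_step, c.last_adj, c.last_mem]
  by_cases hh : step ψ e = h
  · have : ¬G.Adj e.1 e.2 := by rw [← hG.adj_step_iff he.1, hh]; exact c.head_adj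
    simp [swap_ne_head, swap_ne_step, hh, this, c.notMem_of_step_eq hh]
  · have := c.mem_iff_step_mem hx hh
    tauto

/-- Switching reverses the roles of `G` and its complement along the trails in `S`, so the
alternation breaks only at the two ends of the segment, where the marks repair it. -/
lemma isAlternating (c : IsCut G H ψ S h x) (hG : IsAlternating H G.Adj ψ) :
    IsAlternating H (markedAdj (G ∆ dartGraph S) h (step ψ x)) ψ := by
  refine fun y => ⟨(hG y).involutive, (hG y).apply_ne_iff, fun {z} hz => ?_⟩
  rcases hG.isTransition.mem_forwardDarts_or_swap_mem (e := (y, z)) hz with hyz | hzy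
  · have step_eq : step ψ (ψ y z, y) = (y, z) := Prod.ext rfl ((hG y).involutive z)
    have := c.markedAdj_step_iff hG (e := (ψ y z, y))
      (hG.isTransition.step_mem_forwardDarts_iff.mp (step_eq ▸ hyz))
    rw [step_eq] at this
    exact iff_not_comm.mp this
  · exact c.markedAdj_step_iff hG hzy

lemma isNearState (c : IsCut G H ψ S h x) (hG : IsAlternating H G.Adj ψ) (hd : Realizes d G) :
    IsNearState d (G ∆ dartGraph S) h.1 x.2 :=
  (c.isMissingPair hG).isNearState hG (c.isAlternating hG) (dartGraph_le c.subset) hd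

lemma isNearState_compl (c : IsCut G H ψ S h x) (hG : IsAlternating H G.Adj ψ)
    (hd : Realizes d G) : IsNearState d
      (G ∆ dartGraph S ∆ H ∆ edge h.1 h.2 ∆ edge x.2 (step ψ x).2) h.2 (step ψ x).2 :=
  (c.isMissingPair hG).isNearState_compl (c.isAlternating hG) (c.isNearState hG hd)

end IsCut

end Cuts

/-! ### Switching along the trails -/

section Switching

variable {V : Type*} [Fintype V] {G H : SimpleGraph V} {ψ : V → Equiv.Perm V} {h e : V × V}
  {j t : ℕ} {d : V → ℕ} {D : ℕ} {F : SimpleGraph V → ℝ}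

/-- The forward darts on edges of `G`. -/
def blueDarts (G H : SimpleGraph V) (ψ : V → Equiv.Perm V) : Finset (V × V) :=
  Finset.univ.filter fun e => e ∈ forwardDarts H ψ ∧ G.Adj e.1 e.2

@[simp] lemma mem_blueDarts : e ∈ blueDarts G H ψ ↔ e ∈ forwardDarts H ψ ∧ G.Adj e.1 e.2 := by
  simp [blueDarts]

/-- The forward darts of all trails with number less than `c`. -/
def trailsBelow (H : SimpleGraph V) (ψ : V → Equiv.Perm V) (c : ℕ) : Set (V × V) :=
  {e ∈ forwardDarts H ψ | cycleNumber (step ψ) e < c}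

/-- The darts of all trails preceding that of `h`, and the first `j` darts from `h` on. -/
def initialSegment (H : SimpleGraph V) (ψ : V → Equiv.Perm V) (h : V × V) (j : ℕ) :
    Set (V × V) :=
  trailsBelow H ψ (cycleNumber (step ψ) h) ∪ {e | ∃ t < j, (step ψ)^[t] h = e}

lemma initialSegment_zero (H : SimpleGraph V) (ψ : V → Equiv.Perm V) (h : V × V) :
    initialSegment H ψ h 0 = trailsBelow H ψ (cycleNumber (step ψ) h) := by
  simp [initialSegment]

lemma initialSegment_succ (H : SimpleGraph V) (ψ : V → Equiv.Perm V) (h : V × V) (j : ℕ) :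
    initialSegment H ψ h (j + 1) = insert ((step ψ)^[j] h) (initialSegment H ψ h j) := by
  ext e
  simp only [initialSegment, Nat.exists_lt_succ_right, Set.mem_union, Set.mem_ofPred_eq,
    Set.mem_insert_iff, eq_comm (a := e)]
  rw [← or_assoc, or_comm]

lemma iterate_mem_initialSegment_iff (hj : j ≤ Function.minimalPeriod (step ψ) h)
    (ht : t < Function.minimalPeriod (step ψ) h) :
    (step ψ)^[t] h ∈ initialSegment H ψ h j ↔ t < j := by
  constructor
  · rintro (⟨-, hlt⟩ | ⟨s, hs, heq⟩)
    · exact absurd hlt (cycleNumber_iterate (step ψ) h t).not_lt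
    · rwa [← Function.iterate_injOn_Iio_minimalPeriod (hs.trans_le hj) ht heq]
  · exact fun htj => .inr ⟨t, htj, rfl⟩

lemma initialSegment_subset (hψ : IsTransition H ψ) (hh : h ∈ forwardDarts H ψ) (j : ℕ) :
    initialSegment H ψ h j ⊆ forwardDarts H ψ := by
  rintro e (he | ⟨t, -, rfl⟩)
  exacts [he.1, hψ.iterate_mem_forwardDarts hh t]

lemma initialSegment_minimalPeriod (hψ : IsTransition H ψ) (hh : h ∈ forwardDarts H ψ) :
    initialSegment H ψ h (Function.minimalPeriod (step ψ) h) =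
      trailsBelow H ψ (cycleNumber (step ψ) h + 1) := by
  refine Set.Subset.antisymm (fun e he => ⟨initialSegment_subset hψ hh _ he, ?_⟩) ?_
  · rcases he with he | ⟨t, -, rfl⟩
    · exact he.2.trans (Nat.lt_succ_self _)
    · rw [cycleNumber_iterate]; exact Nat.lt_succ_self _
  · rintro e ⟨he, hlt⟩
    exact (Nat.lt_succ_iff_lt_or_eq.mp hlt).imp (⟨he, ·⟩) fun heq => exists_iterate_eq heq.symm

lemma step_mem_initialSegment_iff (hψ : IsTransition H ψ) :
    step ψ e ∈ initialSegment H ψ h (j + 1) ↔ step ψ e = h ∨ e ∈ initialSegment H ψ h j := by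
  simp only [initialSegment, trailsBelow, Nat.exists_lt_succ_left, Function.iterate_succ_apply',
    (step ψ).injective.eq_iff, Function.iterate_zero_apply, Set.mem_union, Set.mem_ofPred_eq,
    hψ.step_mem_forwardDarts_iff, cycleNumber_apply, eq_comm (a := h)]
  tauto

namespace IsAlternating

lemma adj_iterate_iff (hG : IsAlternating H G.Adj ψ) (hh : h ∈ blueDarts G H ψ) (t : ℕ) :
    G.Adj ((step ψ)^[t] h).1 ((step ψ)^[t] h).2 ↔ Even t := by
  obtain ⟨hh, hadj⟩ := mem_blueDarts.mp hh
  induction t with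
  | zero => simpa using hadj
  | succ t ih =>
    rw [Function.iterate_succ_apply', hG.adj_step_iff
      (hG.isTransition.iterate_mem_forwardDarts hh t).1, ih, Nat.even_add_one]

lemma even_minimalPeriod (hG : IsAlternating H G.Adj ψ) (hh : h ∈ blueDarts G H ψ) :
    Even (Function.minimalPeriod (step ψ) h) := by
  rw [← hG.adj_iterate_iff hh, Function.iterate_minimalPeriod]
  exact (mem_blueDarts.mp hh).2

lemma isCut (hG : IsAlternating H G.Adj ψ) (hh : h ∈ blueDarts G H ψ) (ht : Even t)
    (htp : t < Function.minimalPeriod (step ψ) h) :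
    IsCut G H ψ (initialSegment H ψ h (t + 1)) h ((step ψ)^[t] h) := by
  have succ_lt : t + 1 < Function.minimalPeriod (step ψ) h := by
    have := hG.even_minimalPeriod hh
    grind
  refine ⟨initialSegment_subset hG.isTransition (mem_blueDarts.mp hh).1 _,
    .inr ⟨0, t.succ_pos, rfl⟩, .inr ⟨t, t.lt_succ_self, rfl⟩, (mem_blueDarts.mp hh).2,
    (hG.adj_iterate_iff hh t).mpr ht, ?_, ?_, ?_⟩
  · rw [← Function.iterate_succ_apply' (step ψ), iterate_mem_initialSegment_iff succ_lt.le succ_lt]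
    exact lt_irrefl _
  · rintro e rfl (⟨-, hlt⟩ | ⟨s, hs, heq⟩)
    · exact absurd hlt (cycleNumber_apply (step ψ) e).symm.not_lt
    · refine Function.not_isPeriodicPt_of_pos_of_lt_minimalPeriod s.succ_ne_zero
        ((Nat.succ_le_of_lt hs).trans_lt succ_lt) ?_
      rw [Function.IsPeriodicPt, Function.IsFixedPt, Function.iterate_succ_apply', heq]
  · intro e he hstep
    rw [step_mem_initialSegment_iff hG.isTransition, initialSegment_succ, Set.mem_insert_iff]
    simp [he, hstep]

end IsAlternating

/-- `G` with `initialSegment H ψ h j` switched. -/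
def partialSwitch (G H : SimpleGraph V) (ψ : V → Equiv.Perm V) (h : V × V) (j : ℕ) :
    SimpleGraph V :=
  G ∆ dartGraph (initialSegment H ψ h j)

/-- The near-state reached from `G` by switching all trails preceding that of `h` and the darts
from `h` to its `t`-th successor. -/
def trailState (G H : SimpleGraph V) (ψ : V → Equiv.Perm V) (h : V × V) (t : ℕ) :
    SimpleGraph V × V × V :=
  (partialSwitch G H ψ h (t + 1), h.1, ((step ψ)^[t] h).2)

namespace IsAlternating

lemma partialSwitch_succ (hG : IsAlternating H G.Adj ψ) (hh : h ∈ blueDarts G H ψ)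
    (hj : j < Function.minimalPeriod (step ψ) h) : partialSwitch G H ψ h (j + 1) =
      partialSwitch G H ψ h j ∆ edge ((step ψ)^[j] h).1 ((step ψ)^[j] h).2 := by
  have hh := (mem_blueDarts.mp hh).1
  rw [partialSwitch, initialSegment_succ,
    dartGraph_insert (initialSegment_subset hG.isTransition hh _)
      (hG.isTransition.iterate_mem_forwardDarts hh j), ← symmDiff_assoc, partialSwitch]
  rw [iterate_mem_initialSegment_iff hj.le hj]
  exact lt_irrefl j

lemma partialSwitch_adj_iterate_iff (hG : IsAlternating H G.Adj ψ) (hh : h ∈ blueDarts G H ψ)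
    (hjt : j ≤ t) (ht : t < Function.minimalPeriod (step ψ) h) :
    (partialSwitch G H ψ h j).Adj ((step ψ)^[t] h).1 ((step ψ)^[t] h).2 ↔ Even t := by
  have hh' := (mem_blueDarts.mp hh).1
  rw [partialSwitch, adj_symmDiff_dartGraph (initialSegment_subset hG.isTransition hh' _)
    (hG.isTransition.iterate_mem_forwardDarts hh' t), hG.adj_iterate_iff hh,
    iterate_mem_initialSegment_iff (hjt.trans ht.le) ht]
  simp [hjt.not_gt]

lemma isNearState_trailState (hG : IsAlternating H G.Adj ψ) (hh : h ∈ blueDarts G H ψ)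
    (hGd : Realizes d G) (ht : Even t) (htp : t < Function.minimalPeriod (step ψ) h) :
    IsNearState d (partialSwitch G H ψ h (t + 1)) h.1 ((step ψ)^[t] h).2 :=
  (hG.isCut hh ht htp).isNearState hG hGd

lemma dist_open_trail_le (hG : IsAlternating H G.Adj ψ) (hh : h ∈ blueDarts G H ψ)
    (hGd : Realizes d G) (hd : IsSparse d D) :
    dist (F (partialSwitch G H ψ h 0)) (F (someCompletion (trailState G H ψ h 0))) ≤
      √(nearEnergy d F (trailState G H ψ h 0)) := by
  have period_pos := minimalPeriod_pos (step ψ) h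
  have hK := hG.isNearState_trailState hh hGd Even.zero period_pos
  have hcut := hG.isCut hh Even.zero period_pos
  have eq : partialSwitch G H ψ h 0 = partialSwitch G H ψ h 1 ∆ edge h.1 h.2 := by
    rw [hG.partialSwitch_succ hh period_pos]
    exact (symmDiff_symmDiff_cancel_right (edge h.1 h.2) _).symm
  rw [dist_comm, eq]
  exact dist_someCompletion_symmDiff_edge_le hK hd (hcut.isMissingPair hG).adj_left.ne
    (hcut.isMissingPair hG).not_adj_left

lemma dist_slide_trail_le (hG : IsAlternating H G.Adj ψ) (hh : h ∈ blueDarts G H ψ)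
    (hGd : Realizes d G) (hd : IsSparse d D) (ht : Even t)
    (htp : t + 2 < Function.minimalPeriod (step ψ) h) :
    dist (F (someCompletion (trailState G H ψ h t)))
        (F (someCompletion (trailState G H ψ h (t + 2)))) ≤
      3 * √(nearEnergy d F (trailState G H ψ h t)) +
        2 * √(nearEnergy d F (trailState G H ψ h (t + 2))) := by
  have fst_succ (s : ℕ) : ((step ψ)^[s + 1] h).1 = ((step ψ)^[s] h).2 := by
    rw [Function.iterate_succ_apply', fst_step]
  have missing := (hG.partialSwitch_adj_iterate_iff hh le_rfl (by omega : t + 1 < _)).not.mpr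
    (by simpa [Nat.even_add_one] using ht)
  have present := (hG.partialSwitch_adj_iterate_iff hh (by omega : t + 1 ≤ t + 2) htp).mpr
    (by simpa [Nat.even_add_one] using ht)
  have dart := hG.isTransition.iterate_mem_forwardDarts (mem_blueDarts.mp hh).1 (t + 1)
  have eq : trailState G H ψ h (t + 2) = (partialSwitch G H ψ h (t + 1) ∆
      edge ((step ψ)^[t] h).2 ((step ψ)^[t + 1] h).2 ∆
        edge ((step ψ)^[t + 1] h).2 ((step ψ)^[t + 2] h).2, h.1, ((step ψ)^[t + 2] h).2) := by
    rw [trailState, hG.partialSwitch_succ hh htp, hG.partialSwitch_succ hh (by omega), fst_succ,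
      fst_succ]
  rw [eq]
  rw [fst_succ] at missing present
  exact dist_someCompletion_slide_le (hG.isNearState_trailState hh hGd ht (by omega)) hd
    (fst_succ t ▸ dart.1.ne) missing present

lemma dist_close_trail_le (hG : IsAlternating H G.Adj ψ) (hh : h ∈ blueDarts G H ψ)
    (hGd : Realizes d G) (hd : IsSparse d D) (ht : Even t)
    (htp : Function.minimalPeriod (step ψ) h = t + 2) :
    dist (F (someCompletion (trailState G H ψ h t))) (F (partialSwitch G H ψ h (t + 2))) ≤
      √(nearEnergy d F (trailState G H ψ h t)) := by
  have fst_last : ((step ψ)^[t + 1] h).1 = ((step ψ)^[t] h).2 := by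
    rw [Function.iterate_succ_apply', fst_step]
  have snd_last : ((step ψ)^[t + 1] h).2 = h.1 := by
    have iterate_eq := Function.iterate_minimalPeriod (f := step ψ) (x := h)
    rw [htp, Function.iterate_succ_apply'] at iterate_eq
    exact congrArg Prod.fst iterate_eq
  have missing := (hG.partialSwitch_adj_iterate_iff hh le_rfl (by omega : t + 1 < _)).not.mpr
    (by simpa [Nat.even_add_one] using ht)
  have dart := hG.isTransition.iterate_mem_forwardDarts (mem_blueDarts.mp hh).1 (t + 1)
  have ne := dart.1.ne
  rw [hG.partialSwitch_succ hh (by omega : t + 1 < _)]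
  rw [fst_last, snd_last] at *
  rw [SimpleGraph.edge_comm]
  exact dist_someCompletion_symmDiff_edge_le (hG.isNearState_trailState hh hGd ht (by omega)) hd
    ne.symm (mt SimpleGraph.Adj.symm missing)

lemma dist_enter_trail_le (hG : IsAlternating H G.Adj ψ) (hh : h ∈ blueDarts G H ψ)
    (hGd : Realizes d G) (hd : IsSparse d D) (i : ℕ)
    (hi : 2 * i < Function.minimalPeriod (step ψ) h) :
    dist (F (partialSwitch G H ψ h 0)) (F (someCompletion (trailState G H ψ h (2 * i)))) ≤
      ∑ k ∈ Finset.range i, 5 * √(nearEnergy d F (trailState G H ψ h (2 * k))) +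
        2 * √(nearEnergy d F (trailState G H ψ h (2 * i))) := by
  induction i with
  | zero =>
    have := hG.dist_open_trail_le (F := F) hh hGd hd
    have := Real.sqrt_nonneg (nearEnergy d F (trailState G H ψ h 0))
    simp only [Finset.range_zero, Finset.sum_empty, mul_zero]
    linarith
  | succ i ih =>
    have := hG.dist_slide_trail_le (F := F) hh hGd hd (even_two_mul i) hi
    have := dist_triangle (F (partialSwitch G H ψ h 0))
      (F (someCompletion (trailState G H ψ h (2 * i))))
      (F (someCompletion (trailState G H ψ h (2 * i + 2))))
    rw [Finset.sum_range_succ, mul_add_one]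
    linarith [ih (by omega)]

lemma dist_switch_trail_le (hG : IsAlternating H G.Adj ψ) (hh : h ∈ blueDarts G H ψ)
    (hGd : Realizes d G) (hd : IsSparse d D) :
    dist (F (partialSwitch G H ψ h 0))
        (F (partialSwitch G H ψ h (Function.minimalPeriod (step ψ) h))) ≤
      ∑ i ∈ Finset.range (Function.minimalPeriod (step ψ) h / 2),
        5 * √(nearEnergy d F (trailState G H ψ h (2 * i))) := by
  obtain ⟨l, hl⟩ : ∃ l, Function.minimalPeriod (step ψ) h = 2 * (l + 1) := by
    obtain ⟨l, hl⟩ := hG.even_minimalPeriod hh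
    have := minimalPeriod_pos (step ψ) h
    exact ⟨l - 1, by omega⟩
  have enter := hG.dist_enter_trail_le (F := F) hh hGd hd l (by omega)
  have close := hG.dist_close_trail_le (F := F) hh hGd hd (even_two_mul l) (by omega)
  have triangle := dist_triangle (F (partialSwitch G H ψ h 0))
    (F (someCompletion (trailState G H ψ h (2 * l)))) (F (partialSwitch G H ψ h (2 * l + 2)))
  have := Real.sqrt_nonneg (nearEnergy d F (trailState G H ψ h (2 * l)))
  rw [hl, Nat.mul_div_cancel_left _ two_pos, Finset.sum_range_succ, mul_add_one]
  linarith

end IsAlternating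

end Switching

section SwitchingAll

variable {V : Type*} {G H : SimpleGraph V} {ψ : V → Equiv.Perm V} {h x y : V × V}
  {c t : ℕ} {d : V → ℕ} {D : ℕ} {F : SimpleGraph V → ℝ}

/-- The number of steps from `h` to `x`. -/
def position (ψ : V → Equiv.Perm V) (h x : V × V) : ℕ := sInf {t | (step ψ)^[t] h = x}

lemma position_iterate (ht : t < Function.minimalPeriod (step ψ) h) :
    position ψ h ((step ψ)^[t] h) = t := by
  have position_le : position ψ h ((step ψ)^[t] h) ≤ t := Nat.sInf_le rfl
  exact Function.iterate_injOn_Iio_minimalPeriod (position_le.trans_lt ht) ht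
    (Nat.sInf_mem (s := {s | (step ψ)^[s] h = (step ψ)^[t] h}) ⟨t, rfl⟩)

variable [Fintype V]

lemma iterate_position (heq : cycleNumber (step ψ) h = cycleNumber (step ψ) x) :
    (step ψ)^[position ψ h x] h = x :=
  have ⟨t, _, ht⟩ := exists_iterate_eq heq
  Nat.sInf_mem (s := {t | (step ψ)^[t] h = x}) ⟨t, ht⟩

lemma position_lt (heq : cycleNumber (step ψ) h = cycleNumber (step ψ) x) :
    position ψ h x < Function.minimalPeriod (step ψ) h := by
  obtain ⟨t, ht, rfl⟩ := exists_iterate_eq heq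
  rwa [position_iterate ht]

/-- A blue dart of the trail through `x` that depends only on the trail; junk if there is none. -/
def start (G H : SimpleGraph V) (ψ : V → Equiv.Perm V) (x : V × V) : V × V :=
  @Classical.epsilon _ ⟨x⟩ fun h =>
    h ∈ blueDarts G H ψ ∧ cycleNumber (step ψ) h = cycleNumber (step ψ) x

/-- The near-state reached on the way from `G` to `G ∆ H` when the trail through `x` has been
switched up to `x`. -/
def nearStateAt (G H : SimpleGraph V) (ψ : V → Equiv.Perm V) (x : V × V) :
    SimpleGraph V × V × V :=
  (partialSwitch G H ψ (start G H ψ x) (position ψ (start G H ψ x) x + 1), (start G H ψ x).1, x.2)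

lemma start_congr (heq : cycleNumber (step ψ) x = cycleNumber (step ψ) y) :
    start G H ψ x = start G H ψ y := by
  simp only [start, heq]

lemma start_spec (hx : x ∈ blueDarts G H ψ) : start G H ψ x ∈ blueDarts G H ψ ∧
    cycleNumber (step ψ) (start G H ψ x) = cycleNumber (step ψ) x :=
  Classical.epsilon_spec_aux ⟨x⟩ (fun h => h ∈ blueDarts G H ψ ∧
    cycleNumber (step ψ) h = cycleNumber (step ψ) x) ⟨x, hx, rfl⟩

lemma start_mem_blueDarts (hx : x ∈ blueDarts G H ψ) : start G H ψ x ∈ blueDarts G H ψ :=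
  (start_spec hx).1

lemma cycleNumber_start (hx : x ∈ blueDarts G H ψ) :
    cycleNumber (step ψ) (start G H ψ x) = cycleNumber (step ψ) x :=
  (start_spec hx).2

namespace IsAlternating

lemma isCut_start (hG : IsAlternating H G.Adj ψ) (hx : x ∈ blueDarts G H ψ) :
    IsCut G H ψ (initialSegment H ψ (start G H ψ x) (position ψ (start G H ψ x) x + 1))
      (start G H ψ x) x := by
  have hh := start_mem_blueDarts hx
  have heq := iterate_position (cycleNumber_start hx)
  have even_position := (hG.adj_iterate_iff hh _).mp (heq.symm ▸ (mem_blueDarts.mp hx).2)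
  have := hG.isCut hh even_position (position_lt (cycleNumber_start hx))
  rwa [heq] at this

lemma exists_mem_blueDarts (hG : IsAlternating H G.Adj ψ) (hy : y ∈ forwardDarts H ψ) :
    ∃ x ∈ blueDarts G H ψ, cycleNumber (step ψ) x = cycleNumber (step ψ) y := by
  by_cases hadj : G.Adj y.1 y.2
  · exact ⟨y, mem_blueDarts.mpr ⟨hy, hadj⟩, rfl⟩
  · exact ⟨step ψ y, mem_blueDarts.mpr ⟨hG.isTransition.step_mem_forwardDarts_iff.mpr hy,
      (hG.adj_step_iff hy.1).mpr hadj⟩, cycleNumber_apply _ _⟩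

lemma sum_trailState_le (hG : IsAlternating H G.Adj ψ) (hy : y ∈ blueDarts G H ψ)
    {f : SimpleGraph V × V × V → ℝ} (hf : 0 ≤ f) :
    ∑ i ∈ Finset.range (Function.minimalPeriod (step ψ) (start G H ψ y) / 2),
        f (trailState G H ψ (start G H ψ y) (2 * i)) ≤
      ∑ x ∈ blueDarts G H ψ with cycleNumber (step ψ) x = cycleNumber (step ψ) y,
        f (nearStateAt G H ψ x) := by
  have hh := start_mem_blueDarts hy
  have number_eq := cycleNumber_start hy
  have start_eq (t : ℕ) : start G H ψ ((step ψ)^[t] (start G H ψ y)) = start G H ψ y :=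
    start_congr ((cycleNumber_iterate ..).trans number_eq)
  have two_mul_lt {i : ℕ}
      (hi : i ∈ Finset.range (Function.minimalPeriod (step ψ) (start G H ψ y) / 2)) :
      2 * i < Function.minimalPeriod (step ψ) (start G H ψ y) := by
    rw [Finset.mem_range] at hi
    omega
  have injOn : Set.InjOn (fun i => (step ψ)^[2 * i] (start G H ψ y))
      (Finset.range (Function.minimalPeriod (step ψ) (start G H ψ y) / 2)) := fun i hi k hk heq =>
    Nat.eq_of_mul_eq_mul_left two_pos (Function.iterate_injOn_Iio_minimalPeriod
      (two_mul_lt hi) (two_mul_lt hk) heq)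
  calc _ = ∑ i ∈ Finset.range (Function.minimalPeriod (step ψ) (start G H ψ y) / 2),
        f (nearStateAt G H ψ ((step ψ)^[2 * i] (start G H ψ y))) :=
        Finset.sum_congr rfl fun i hi => by
          rw [nearStateAt, start_eq, position_iterate (two_mul_lt hi), trailState]
    _ = _ := (Finset.sum_image (f := fun x => f (nearStateAt G H ψ x)) injOn).symm
    _ ≤ _ := by
      refine Finset.sum_le_sum_of_subset_of_nonneg ?_ fun _ _ _ => hf _
      intro x hx
      obtain ⟨i, -, rfl⟩ := Finset.mem_image.mp hx
      refine Finset.mem_filter.mpr ⟨mem_blueDarts.mpr ⟨hG.isTransition.iterate_mem_forwardDarts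
        (mem_blueDarts.mp hh).1 _, (hG.adj_iterate_iff hh _).mpr (even_two_mul i)⟩, ?_⟩
      rw [cycleNumber_iterate, number_eq]

lemma dist_trailsBelow_succ_le (hG : IsAlternating H G.Adj ψ) (hGd : Realizes d G)
    (hd : IsSparse d D) (c : ℕ) :
    dist (F (G ∆ dartGraph (trailsBelow H ψ c))) (F (G ∆ dartGraph (trailsBelow H ψ (c + 1)))) ≤
      ∑ x ∈ blueDarts G H ψ with cycleNumber (step ψ) x = c,
        5 * √(nearEnergy d F (nearStateAt G H ψ x)) := by
  by_cases hc : ∃ y ∈ forwardDarts H ψ, cycleNumber (step ψ) y = c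
  · obtain ⟨z, hz, rfl⟩ := hc
    obtain ⟨y, hy, hyz⟩ := hG.exists_mem_blueDarts hz
    have hh := start_mem_blueDarts hy
    have path := hG.dist_switch_trail_le (F := F) hh hGd hd
    rw [partialSwitch, partialSwitch, initialSegment_zero,
      initialSegment_minimalPeriod hG.isTransition (mem_blueDarts.mp hh).1,
      cycleNumber_start hy] at path
    rw [← hyz]
    exact path.trans (hG.sum_trailState_le hy (f := fun N => 5 * √(nearEnergy d F N))
      fun N => by positivity)
  · have eq : trailsBelow H ψ (c + 1) = trailsBelow H ψ c := by
      ext e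
      refine and_congr_right fun he => ?_
      have : cycleNumber (step ψ) e ≠ c := fun heq => hc ⟨e, he, heq⟩
      omega
    rw [eq, dist_self]
    exact Finset.sum_nonneg fun _ _ => by positivity

lemma dist_symmDiff_le (hG : IsAlternating H G.Adj ψ) (hGd : Realizes d G) (hd : IsSparse d D) :
    dist (F G) (F (G ∆ H)) ≤
      ∑ x ∈ blueDarts G H ψ, 5 * √(nearEnergy d F (nearStateAt G H ψ x)) := by
  have trails_zero : dartGraph (trailsBelow H ψ 0) = ⊥ := by
    ext
    simp [dartGraph, trailsBelow]
  have trails_all : trailsBelow H ψ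
      (Fintype.card (Quotient (Equiv.Perm.SameCycle.setoid (step ψ)))) = forwardDarts H ψ :=
    Set.sep_eq_self_iff_mem_true.mpr fun e _ => cycleNumber_lt (step ψ) e
  have path := dist_le_range_sum_of_dist_le
    (f := fun c => F (G ∆ dartGraph (trailsBelow H ψ c)))
    (Fintype.card (Quotient (Equiv.Perm.SameCycle.setoid (step ψ))))
    fun {c} _ => hG.dist_trailsBelow_succ_le hGd hd c
  rw [trails_zero, trails_all, hG.isTransition.dartGraph_forwardDarts, symmDiff_bot] at path
  exact path.trans_eq (Finset.sum_fiberwise_of_maps_to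
    (fun x _ => Finset.mem_range.mpr (cycleNumber_lt (step ψ) x)) _)

end IsAlternating

end SwitchingAll

/-! ### Decoding and congestion -/

section Congestion

variable {V : Type*} [Fintype V] {G H G₁ H₁ : SimpleGraph V} {ψ ψ' : V → Equiv.Perm V}
  {x x₁ : V × V} {d : V → ℕ} {T T' : V → V → Prop}

/-- The near-state complementary to `nearStateAt G H ψ x`: what that near-state leaves of the
multigraph `G + (G ∆ H)`, with one edge of the trail through `x` deleted at each of the two
defects. -/
def complementAt (G H : SimpleGraph V) (ψ : V → Equiv.Perm V) (x : V × V) :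
    SimpleGraph V × V × V :=
  ((nearStateAt G H ψ x).1 ∆ H ∆ edge (start G H ψ x).1 (start G H ψ x).2 ∆
    edge x.2 (step ψ x).2, (start G H ψ x).2, (step ψ x).2)

/-- The symmetric difference of the two realizations, recovered from two complementary
near-states. -/
def decodedGraph (N L : SimpleGraph V × V × V) : SimpleGraph V :=
  N.1 ∆ L.1 ∆ edge N.2.1 L.2.1 ∆ edge N.2.2 L.2.2

/-- The candidates for the transition system, recovered from two complementary near-states. -/
def decodedSystems (N L : SimpleGraph V × V × V) : Finset (V → Equiv.Perm V) :=
  alternatingSystems (decodedGraph N L) (markedAdj N.1 (N.2.1, L.2.1) (N.2.2, L.2.2))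

lemma decodedGraph_complementAt (G H : SimpleGraph V) (ψ : V → Equiv.Perm V) (x : V × V) :
    decodedGraph (nearStateAt G H ψ x) (complementAt G H ψ x) = H := by
  simp [decodedGraph, complementAt, nearStateAt, symmDiff_assoc, symmDiff_comm,
    symmDiff_left_comm]

lemma decodedSystems_complementAt (G H : SimpleGraph V) (ψ : V → Equiv.Perm V) (x : V × V) :
    decodedSystems (nearStateAt G H ψ x) (complementAt G H ψ x) =
      alternatingSystems H
        (markedAdj (nearStateAt G H ψ x).1 (start G H ψ x) (step ψ x)) := by
  rw [decodedSystems, decodedGraph_complementAt]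
  rfl

lemma eq_of_nearStateAt_eq_of_complementAt_eq
    (hN : nearStateAt G H ψ x = nearStateAt G₁ H₁ ψ x₁)
    (hL : complementAt G H ψ x = complementAt G₁ H₁ ψ x₁) : G = G₁ ∧ H = H₁ ∧ x = x₁ := by
  obtain rfl : H = H₁ := by
    rw [← decodedGraph_complementAt G H ψ x, hN, hL, decodedGraph_complementAt]
  simp only [complementAt, nearStateAt, Prod.mk.injEq] at hN hL
  obtain rfl : x = x₁ := (step ψ).injective (Prod.ext hN.2.2 hL.2.2)
  have start_eq : start G H ψ x = start G₁ H ψ x := Prod.ext hN.2.1 hL.2.1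
  rw [start_eq] at hN
  exact ⟨symmDiff_left_injective _ hN.1, rfl, rfl⟩

namespace IsAlternating

lemma card_alternatingSystems_eq (h : IsAlternating H T ψ) (h' : IsAlternating H T' ψ') :
    (alternatingSystems H T).card = (alternatingSystems H T').card := by
  rw [card_alternatingSystems h.two_mul_ncard, card_alternatingSystems h'.two_mul_ncard]

lemma mem_decodedSystems (hG : IsAlternating H G.Adj ψ) (hx : x ∈ blueDarts G H ψ) :
    ψ ∈ decodedSystems (nearStateAt G H ψ x) (complementAt G H ψ x) := by
  rw [decodedSystems_complementAt, mem_alternatingSystems]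
  exact (hG.isCut_start hx).isAlternating hG

lemma card_decodedSystems (hG : IsAlternating H G.Adj ψ) (hx : x ∈ blueDarts G H ψ) :
    (decodedSystems (nearStateAt G H ψ x) (complementAt G H ψ x)).card =
      (alternatingSystems H G.Adj).card := by
  rw [decodedSystems_complementAt]
  exact card_alternatingSystems_eq ((hG.isCut_start hx).isAlternating hG) hG

lemma nearStateAt_mem (hG : IsAlternating H G.Adj ψ) (hx : x ∈ blueDarts G H ψ)
    (hGd : Realizes d G) : nearStateAt G H ψ x ∈ nearStates d :=
  mem_nearStates.mpr ((hG.isCut_start hx).isNearState hG hGd)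

lemma complementAt_mem (hG : IsAlternating H G.Adj ψ) (hx : x ∈ blueDarts G H ψ)
    (hGd : Realizes d G) : complementAt G H ψ x ∈ nearStates d :=
  mem_nearStates.mpr ((hG.isCut_start hx).isNearState_compl hG hGd)

end IsAlternating

/-- The data `(G, G')`, `ψ`, `x` of a switching path from `G` to `G'` and a position on it. -/
def pathPositions (d : V → ℕ) : Finset (Σ _ : SimpleGraph V × SimpleGraph V,
    Σ _ : V → Equiv.Perm V, V × V) :=
  (realizations d ×ˢ realizations d).sigma fun p =>
    (alternatingSystems (p.1 ∆ p.2) p.1.Adj).sigma fun ψ => blueDarts p.1 (p.1 ∆ p.2) ψ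

/-- The encoding of a position on a switching path by two near-states and the transition system. -/
def encode (τ : Σ _ : SimpleGraph V × SimpleGraph V, Σ _ : V → Equiv.Perm V, V × V) :
    Σ _ : (SimpleGraph V × V × V) × SimpleGraph V × V × V, V → Equiv.Perm V :=
  ⟨(nearStateAt τ.1.1 (τ.1.1 ∆ τ.1.2) τ.2.1 τ.2.2,
    complementAt τ.1.1 (τ.1.1 ∆ τ.1.2) τ.2.1 τ.2.2), τ.2.1⟩

lemma encode_injective : Function.Injective (encode (V := V)) := by
  rintro ⟨⟨G, G'⟩, ψ, x⟩ ⟨⟨G₁, G₁'⟩, ψ₁, x₁⟩ heq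
  simp only [encode, Sigma.mk.injEq, heq_eq_eq, Prod.mk.injEq] at heq
  obtain ⟨⟨hN, hL⟩, rfl⟩ := heq
  obtain ⟨rfl, hH, rfl⟩ := eq_of_nearStateAt_eq_of_complementAt_eq hN hL
  rw [symmDiff_right_injective _ hH]

lemma sum_pathPositions_le (d : V → ℕ) {f : SimpleGraph V × V × V → ℝ} (hf : 0 ≤ f) :
    ∑ τ ∈ pathPositions d, ((alternatingSystems (τ.1.1 ∆ τ.1.2) τ.1.1.Adj).card : ℝ)⁻¹ *
        f (nearStateAt τ.1.1 (τ.1.1 ∆ τ.1.2) τ.2.1 τ.2.2) ≤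
      (nearStates d).card * ∑ N ∈ nearStates d, f N := by
  let g (σ : Σ _ : (SimpleGraph V × V × V) × SimpleGraph V × V × V, V → Equiv.Perm V) : ℝ :=
    ((decodedSystems σ.1.1 σ.1.2).card : ℝ)⁻¹ * f σ.1.1
  have g_nonneg (σ) : 0 ≤ g σ := mul_nonneg (by positivity) (hf _)
  have isAlternating {τ} (hτ : τ ∈ pathPositions d) :
      IsAlternating (τ.1.1 ∆ τ.1.2) τ.1.1.Adj τ.2.1 ∧
        τ.2.2 ∈ blueDarts τ.1.1 (τ.1.1 ∆ τ.1.2) τ.2.1 ∧ Realizes d τ.1.1 := by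
    simp only [pathPositions, Finset.mem_sigma, Finset.mem_product, mem_realizations,
      mem_alternatingSystems] at hτ
    exact ⟨hτ.2.1, hτ.2.2, hτ.1.1⟩
  calc _ = ∑ τ ∈ pathPositions d, g (encode τ) := by
        refine Finset.sum_congr rfl fun τ hτ => ?_
        obtain ⟨hG, hx, -⟩ := isAlternating hτ
        simp only [g, encode, hG.card_decodedSystems hx]
    _ = ∑ σ ∈ (pathPositions d).image encode, g σ :=
        (Finset.sum_image encode_injective.injOn).symm
    _ ≤ ∑ σ ∈ (nearStates d ×ˢ nearStates d).sigma fun p => decodedSystems p.1 p.2, g σ := by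
        refine Finset.sum_le_sum_of_subset_of_nonneg ?_ fun σ _ _ => g_nonneg σ
        intro σ hσ
        obtain ⟨τ, hτ, rfl⟩ := Finset.mem_image.mp hσ
        obtain ⟨hG, hx, hGd⟩ := isAlternating hτ
        exact Finset.mem_sigma.mpr ⟨Finset.mem_product.mpr
          ⟨hG.nearStateAt_mem hx hGd, hG.complementAt_mem hx hGd⟩, hG.mem_decodedSystems hx⟩
    _ ≤ ∑ p ∈ nearStates d ×ˢ nearStates d, f p.1 := by
        rw [Finset.sum_sigma]
        refine Finset.sum_le_sum fun p _ => ?_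
        simp only [g]
        rw [Finset.sum_const, nsmul_eq_mul, ← mul_assoc]
        exact mul_le_of_le_one_left (hf _) mul_inv_le_one
    _ = _ := by
        rw [Finset.sum_product_right]
        simp only [Finset.sum_const, nsmul_eq_mul]

end Congestion

/-! ### The Poincaré inequality of the switch chain -/

section Poincare

variable {V : Type*} [Fintype V] {G G' H : SimpleGraph V} {ψ : V → Equiv.Perm V} {d : V → ℕ}
  {D : ℕ}

lemma card_blueDarts_le (hG : Realizes d G) (H : SimpleGraph V) (ψ : V → Equiv.Perm V) :
    (blueDarts G H ψ).card ≤ ∑ v, d v := by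
  calc (blueDarts G H ψ).card ≤ (Finset.univ.filter fun e : V × V => G.Adj e.1 e.2).card :=
        Finset.card_le_card fun e he => by simpa using (mem_blueDarts.mp he).2
    _ = ∑ v, d v := by
        rw [Finset.card_filter, Fintype.sum_prod_type]
        exact Finset.sum_congr rfl fun v _ => by rw [← hG v, deg_eq_sum]

lemma IsAlternating.sq_sub_symmDiff_le (hG : IsAlternating H G.Adj ψ) (hGd : Realizes d G)
    (hd : IsSparse d D) (F : SimpleGraph V → ℝ) :
    (F G - F (G ∆ H)) ^ 2 ≤
      25 * (∑ v, d v : ℕ) * ∑ x ∈ blueDarts G H ψ, nearEnergy d F (nearStateAt G H ψ x) := by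
  have card_le : ((blueDarts G H ψ).card : ℝ) ≤ (∑ v, d v : ℕ) := by
    exact_mod_cast card_blueDarts_le hGd H ψ
  calc (F G - F (G ∆ H)) ^ 2 = dist (F G) (F (G ∆ H)) ^ 2 := by rw [Real.dist_eq, sq_abs]
    _ ≤ (∑ x ∈ blueDarts G H ψ, 5 * √(nearEnergy d F (nearStateAt G H ψ x))) ^ 2 := by
        gcongr; exact hG.dist_symmDiff_le hGd hd
    _ ≤ (blueDarts G H ψ).card *
          ∑ x ∈ blueDarts G H ψ, (5 * √(nearEnergy d F (nearStateAt G H ψ x))) ^ 2 :=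
        sq_sum_le_card_mul_sum_sq
    _ = 25 * (blueDarts G H ψ).card *
          ∑ x ∈ blueDarts G H ψ, nearEnergy d F (nearStateAt G H ψ x) := by
        simp only [mul_pow, Real.sq_sqrt (nearEnergy_nonneg d F _), ← Finset.mul_sum]
        ring
    _ ≤ _ := by
        gcongr
        exact Finset.sum_nonneg fun x _ => nearEnergy_nonneg d F _

lemma sq_sub_le_sum_alternatingSystems (hG : Realizes d G) (hG' : Realizes d G') (hd : IsSparse d D)
    (F : SimpleGraph V → ℝ) :
    (F G - F G') ^ 2 ≤ 25 * (∑ v, d v : ℕ) *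
      ∑ ψ ∈ alternatingSystems (G ∆ G') G.Adj, ∑ x ∈ blueDarts G (G ∆ G') ψ,
        ((alternatingSystems (G ∆ G') G.Adj).card : ℝ)⁻¹ *
          nearEnergy d F (nearStateAt G (G ∆ G') ψ x) := by
  have card_pos : (0 : ℝ) < (alternatingSystems (G ∆ G') G.Adj).card := by
    exact_mod_cast hG.card_alternatingSystems_pos hG'
  have total := Finset.card_nsmul_le_sum (alternatingSystems (G ∆ G') G.Adj) _ _
    fun ψ hψ => (mem_alternatingSystems.mp hψ).sq_sub_symmDiff_le hG hd F
  rw [symmDiff_symmDiff_cancel_left, nsmul_eq_mul, ← Finset.mul_sum] at total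
  simp only [← Finset.mul_sum]
  rwa [mul_left_comm, ← div_eq_inv_mul, le_div_iff₀' card_pos]

lemma sum_sum_sq_sub_le (hd : IsSparse d D) (F : SimpleGraph V → ℝ) :
    ∑ G ∈ realizations d, ∑ G' ∈ realizations d, (F G - F G') ^ 2 ≤
      25 * (∑ v, d v : ℕ) ^ 5 * (realizations d).card * ∑ A ∈ realizations d, energy d F A := by
  have card_le : ((nearStates d).card : ℝ) ≤ (∑ v, d v : ℕ) ^ 2 * (realizations d).card := by
    exact_mod_cast card_nearStates_le hd
  have sum_nonneg : 0 ≤ ∑ N ∈ nearStates d, nearEnergy d F N :=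
    Finset.sum_nonneg fun N _ => nearEnergy_nonneg d F N
  have congestion := sum_pathPositions_le d (nearEnergy_nonneg d F)
  simp only [pathPositions, Finset.sum_sigma, Finset.sum_product] at congestion
  calc _ ≤ ∑ G ∈ realizations d, ∑ G' ∈ realizations d, _ :=
        Finset.sum_le_sum fun G hG => Finset.sum_le_sum fun G' hG' =>
          sq_sub_le_sum_alternatingSystems (mem_realizations.mp hG) (mem_realizations.mp hG') hd F
    _ ≤ 25 * (∑ v, d v : ℕ) * ((nearStates d).card * ∑ N ∈ nearStates d, nearEnergy d F N) := by
        simp only [← Finset.mul_sum] at congestion ⊢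
        gcongr
    _ ≤ 25 * (∑ v, d v : ℕ) * ((∑ v, d v : ℕ) ^ 2 * (realizations d).card *
          ((∑ v, d v : ℕ) ^ 2 * ∑ A ∈ realizations d, energy d F A)) := by
        gcongr
        exact sum_nearEnergy_le d F
    _ = _ := by ring

end Poincare

section MixingTime

variable {d : Fin n → ℕ} {D : ℕ}

lemma sum_realizations (d : Fin n → ℕ) (φ : SimpleGraph (Fin n) → ℝ) :
    ∑ A ∈ realizations d, φ A = ∑ G : OmegaType d, φ G.1 :=
  Finset.sum_subtype _ (fun _ => mem_realizations) φ

lemma energy_le_sum_transP (F : SimpleGraph (Fin n) → ℝ) (G : OmegaType d) :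
    energy d F G.1 ≤
      3 / 8 * (M d : ℝ) ^ 2 * ∑ H : OmegaType d, transP d G H * (F G.1 - F H.1) ^ 2 := by
  rw [energy, Finset.sum_filter, sum_realizations, Finset.mul_sum]
  refine Finset.sum_le_sum fun H _ => ?_
  have transP_nonneg : 0 ≤ transP d G H := transP_mem_rowStochastic.1 G H
  rw [← mul_assoc]
  split_ifs with h
  · exact le_mul_of_one_le_left (sq_nonneg _) (one_le_mul_transP h)
  · positivity

theorem poincareInequality_transP (hd : IsSparse d D) :
    PoincareInequality (transP d) (10 * (M d : ℝ) ^ 7) := by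
  intro f
  let F : SimpleGraph (Fin n) → ℝ := Function.extend Subtype.val f 0
  have F_coe (G : OmegaType d) : F G.1 = f G := Subtype.val_injective.extend_apply f 0 G
  have card_realizations : ((realizations d).card : ℝ) = Fintype.card (OmegaType d) := by
    simpa using sum_realizations d 1
  have sum_energy_le : ∑ G : OmegaType d, energy d F G.1 ≤
      3 / 8 * (M d : ℝ) ^ 2 * dirichletForm (transP d) f := by
    rw [dirichletForm, Finset.mul_sum]
    exact Finset.sum_le_sum fun G _ => by simpa only [F_coe] using energy_le_sum_transP F G
  have dirichletForm_nonneg : 0 ≤ dirichletForm (transP d) f :=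
    Finset.sum_nonneg fun G _ => Finset.sum_nonneg fun H _ =>
      mul_nonneg (transP_mem_rowStochastic.1 G H) (sq_nonneg _)
  have bound := sum_sum_sq_sub_le hd F
  simp only [card_realizations, sum_realizations, F_coe] at bound
  calc _ ≤ 25 * (M d : ℝ) ^ 5 * Fintype.card (OmegaType d) *
          ∑ G : OmegaType d, energy d F G.1 := bound
    _ ≤ 25 * (M d : ℝ) ^ 5 * Fintype.card (OmegaType d) *
          (3 / 8 * (M d : ℝ) ^ 2 * dirichletForm (transP d) f) := by gcongr
    _ = 75 / 8 * (M d : ℝ) ^ 7 * Fintype.card (OmegaType d) * dirichletForm (transP d) f := by ring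
    _ ≤ 10 * (M d : ℝ) ^ 7 * Fintype.card (OmegaType d) * dirichletForm (transP d) f := by
        gcongr; norm_num

theorem main_undirected_general (d : Fin n → ℕ) (hgraphical : (Omega d).Nonempty)
    (hsparse : dmax d * (5 * dmax d + 11) + 2 < M d) (ε : ℝ) (hε0 : 0 < ε) (hε1 : ε ≤ 1) :
    (mixingTime (transP d) (uniformDist d) ε : ℝ) ≤
      31 * (M d : ℝ) ^ 7 * ((1 / 2) * (M d : ℝ) * Real.log (M d) + Real.log ε⁻¹) := by
  have isSparse : IsSparse d (dmax d) := ⟨fun v => Finset.le_sup (Finset.mem_univ v), hsparse⟩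
  have three_le : (3 : ℝ) ≤ M d := by exact_mod_cast (show 3 ≤ M d by omega)
  have card_pos : (0 : ℝ) < Fintype.card (OmegaType d) := by
    exact_mod_cast Fintype.card_pos_iff.mpr hgraphical.to_subtype
  have log_card_le : Real.log (Fintype.card (OmegaType d)) ≤ M d * Real.log (M d) := by
    rw [← Real.log_pow]
    exact Real.log_le_log card_pos (by exact_mod_cast card_OmegaType_le d)
  have one_le_log : 1 ≤ Real.log (M d) := by
    rw [Real.le_log_iff_exp_le (by linarith)]
    linarith [Real.exp_one_lt_d9]
  have log_nonneg : 0 ≤ Real.log ε⁻¹ := Real.log_nonneg ((one_le_inv₀ hε0).mpr hε1)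
  have one_le : 1 ≤ (M d : ℝ) ^ 7 * (1 / 2 * M d * Real.log (M d) + Real.log ε⁻¹) :=
    one_le_mul_of_one_le_of_one_le (one_le_pow₀ (by linarith)) (by nlinarith)
  calc (mixingTime (transP d) (uniformDist d) ε : ℝ)
      ≤ 10 * (M d : ℝ) ^ 7 / (1 / 3) *
          (1 / 2 * Real.log (Fintype.card (OmegaType d)) + Real.log ε⁻¹) + 1 :=
        mixingTime_le_of_poincareInequality transP_mem_rowStochastic transP_isSymm (by norm_num)
          one_third_le_transP_self (by positivity) (poincareInequality_transP isSparse) hε0 hε1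
    _ ≤ 10 * (M d : ℝ) ^ 7 / (1 / 3) *
          (1 / 2 * (M d * Real.log (M d)) + Real.log ε⁻¹) + 1 := by gcongr
    _ ≤ _ := by linarith

end MixingTime

theorem main_undirected
    (d : Fin n → ℕ) (hgraphical : (Omega d).Nonempty)
    (hdmin : ∀ v, 1 ≤ d v)
    (hdmax3 : 3 ≤ dmax d)
    (hdmaxM : (dmax d : ℝ) ≤ (1 / 3) * Real.sqrt (M d))
    (ε : ℝ) (hε0 : 0 < ε) (hε1 : ε < 1) :
    (mixingTime (transP d) (uniformDist d) ε : ℝ) ≤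
      (dmax d : ℝ) ^ 14 * (M d : ℝ) ^ 9 *
        ((1 / 2) * (M d : ℝ) * Real.log (M d) + Real.log ε⁻¹) := by
  have nine_mul_sq_le : 9 * dmax d ^ 2 ≤ M d := by
    rify
    linarith [(Real.le_sqrt' (by positivity)).mp (by linarith : 3 * (dmax d : ℝ) ≤ √(M d))]
  have one_le : (1 : ℝ) ≤ M d := by exact_mod_cast (show 1 ≤ M d by nlinarith)
  have coeff_le : (31 : ℝ) ≤ (dmax d : ℝ) ^ 14 := calc
    (31 : ℝ) ≤ 3 ^ 14 := by norm_num
    _ ≤ (dmax d : ℝ) ^ 14 := by gcongr; exact_mod_cast hdmax3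
  have log_nonneg : 0 ≤ Real.log ε⁻¹ := Real.log_nonneg ((one_le_inv₀ hε0).mpr hε1.le)
  refine (main_undirected_general d hgraphical (by nlinarith) ε hε0 hε1.le).trans ?_
  gcongr
  norm_num

end SwitchChain
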